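/- arXiv:1406.4269 — 4 statements merged into one kernel-verified Lean document; each statement's English description precedes it below -/
import Mathlib

section
/- Let g ≥ 1 be an integer, N a positive even integer, Π a symmetric g×g complex matrix whose imaginary part Π_I is positive definite, and μ ∈ ℤ^g. Then the theta series θ_μ^Π : ℂ^g → ℂ is holomorphic, i.e., complex differentiable at every point of ℂ^g. -/
open scoped BigOperators

/-- The term of index `n ∈ ℤ^g` in the theta series `θ_μ^Π`:
`exp(2πiN[ (1/2)(μ/N+n)ᵀ Π (μ/N+n) + (μ/N+n)ᵀ z ])`. -/
noncomputable def thetaTerm (g N : ℕ) (P : Matrix (Fin g) (Fin g) ℂ) (μ : Fin g → ℤ)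
    (z : Fin g → ℂ) (n : Fin g → ℤ) : ℂ :=
  Complex.exp (2 * Real.pi * Complex.I * N *
    ((1 / 2) * ∑ j, ∑ k, ((μ j : ℂ) / N + (n j : ℂ)) * P j k * ((μ k : ℂ) / N + (n k : ℂ))
      + ∑ j, ((μ j : ℂ) / N + (n j : ℂ)) * z j))

/-- The theta series `θ_μ^Π(z) = Σ_{n ∈ ℤ^g} exp(2πiN[(1/2)(μ/N+n)ᵀΠ(μ/N+n) + (μ/N+n)ᵀz])`. -/
noncomputable def theta (g N : ℕ) (P : Matrix (Fin g) (Fin g) ℂ) (μ : Fin g → ℤ)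
    (z : Fin g → ℂ) : ℂ :=
  ∑' n : Fin g → ℤ, thetaTerm g N P μ z n


lemma aux_summable_pi : ∀ (g : ℕ) (f : Fin g → ℤ → ℝ), (∀ j n, 0 ≤ f j n) →
    (∀ j, Summable (f j)) → Summable (fun n : Fin g → ℤ => ∏ j, f j (n j)) := by
  intro g
  induction g with
  | zero => intro f _ _; exact Summable.of_finite
  | succ g ih =>
    intro f h0 hs
    have h1 := ih (fun j => f j.succ) (fun j n => h0 _ _) (fun j => hs _)
    have h2 := (hs 0).mul_of_nonneg h1 (fun n => h0 0 n)
      (fun n => Finset.prod_nonneg (fun j _ => h0 _ _))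
    rw [← (Fin.consEquiv (fun _ : Fin (g+1) => ℤ)).summable_iff]
    refine h2.congr ?_
    intro x
    simp [Fin.prod_univ_succ, Fin.consEquiv]

lemma aux_summable_one (α β b : ℝ) (hα : 0 < α) :
    Summable (fun n : ℤ => Real.exp (-α * (b + n)^2 + β * |b + n|)) := by
  have h1 : Summable (fun n : ℤ => Real.exp (-|(n:ℝ)|)) := by
    apply Summable.of_nat_of_neg
    · simpa using Real.summable_exp_neg_nat
    · simpa using Real.summable_exp_neg_nat
  refine Summable.of_nonneg_of_le (fun n => (Real.exp_pos _).le) ?_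
    (h1.mul_left (Real.exp ((β+1)^2/(4*α) + |b|)))
  intro n
  rw [← Real.exp_add, Real.exp_le_exp]
  have h2 : |(n:ℝ)| ≤ |b + n| + |b| := by
    have := abs_sub (b + n) b
    simpa using this
  have h3 : (β+1) * |b+n| ≤ (β+1)^2/(4*α) + α * (b+n)^2 := by
    rw [← sq_abs (b+n), ← sub_nonneg]
    have : (β+1)^2/(4*α) + α * |b+n|^2 - (β+1) * |b+n| = (2*α*|b+n| - (β+1))^2/(4*α) := by
      field_simp; ring
    rw [this]; positivity
  linarith

lemma aux_posdef (g : ℕ) (hg : 1 ≤ g) (A : Matrix (Fin g) (Fin g) ℝ) (hA : A.PosDef) :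
    ∃ c : ℝ, 0 < c ∧ ∀ x : Fin g → ℝ, c * ∑ j, x j ^ 2 ≤ ∑ j, ∑ k, x j * A j k * x k := by
  have hpos : ∀ x : Fin g → ℝ, x ≠ 0 → 0 < ∑ j, ∑ k, x j * A j k * x k := by
    intro x hx
    have := hA.dotProduct_mulVec_pos hx
    simpa [dotProduct, Matrix.mulVec, Finset.mul_sum, mul_assoc] using this
  have : Nonempty (Fin g) := ⟨⟨0, hg⟩⟩
  have : Nontrivial (Fin g → ℝ) := Function.nontrivial
  obtain ⟨y, hy, hmin⟩ := (isCompact_sphere (0 : Fin g → ℝ) 1).exists_isMinOn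
    (NormedSpace.sphere_nonempty.2 zero_le_one)
    (f := fun x : Fin g → ℝ => ∑ j, ∑ k, x j * A j k * x k) (by fun_prop)
  have hy0 : y ≠ 0 := by
    rintro rfl
    simp at hy
  have hgp : (0:ℝ) < g := by exact_mod_cast hg
  refine ⟨(∑ j, ∑ k, y j * A j k * y k) / g, div_pos (hpos y hy0) hgp, fun x => ?_⟩
  set m := ∑ j, ∑ k, y j * A j k * y k with hm
  have hmp : 0 < m := hpos y hy0
  by_cases hx : x = 0
  · subst hx; simp
  have hxn : 0 < ‖x‖ := norm_pos_iff.2 hx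
  have h1 : m ≤ ∑ j, ∑ k, (‖x‖⁻¹ • x) j * A j k * (‖x‖⁻¹ • x) k := by
    refine hmin (a := ‖x‖⁻¹ • x) ?_
    simp [norm_smul, hxn.ne']
  have h2 : ∑ j, ∑ k, (‖x‖⁻¹ • x) j * A j k * (‖x‖⁻¹ • x) k
      = (‖x‖^2)⁻¹ * ∑ j, ∑ k, x j * A j k * x k := by
    simp only [Finset.mul_sum, Pi.smul_apply, smul_eq_mul]
    refine Finset.sum_congr rfl fun j _ => Finset.sum_congr rfl fun k _ => ?_
    field_simp
  rw [h2, ← div_eq_inv_mul, le_div_iff₀ (by positivity)] at h1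
  refine le_trans ?_ h1
  have h3 : ∑ j, x j ^ 2 ≤ g * ‖x‖^2 := by
    calc ∑ j, x j ^ 2 ≤ ∑ j : Fin g, ‖x‖^2 := by
          refine Finset.sum_le_sum fun j _ => ?_
          rw [← sq_abs]
          have := norm_le_pi_norm x j
          rw [Real.norm_eq_abs] at this
          gcongr
      _ = _ := by simp
  calc m / g * ∑ j, x j ^ 2 ≤ m / g * (g * ‖x‖^2) := by gcongr
    _ = _ := by field_simp

lemma aux_norm (g N : ℕ) (P : Matrix (Fin g) (Fin g) ℂ) (μ : Fin g → ℤ)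
    (z : Fin g → ℂ) (n : Fin g → ℤ) :
    ‖thetaTerm g N P μ z n‖ = Real.exp (-(Real.pi * N) * (∑ j, ∑ k, ((μ j : ℝ) / N + n j) *
      (P.map Complex.im) j k * ((μ k : ℝ) / N + n k)) -
      2 * Real.pi * N * ∑ j, ((μ j : ℝ) / N + n j) * (z j).im) := by
  have hc : ∀ j, ((μ j : ℂ) / N + (n j : ℂ)) = (((μ j : ℝ) / N + n j : ℝ) : ℂ) := by
    intro j; push_cast; rfl
  have hI : (2 * Real.pi * Complex.I * N : ℂ) = ((2 * Real.pi * N : ℝ) : ℂ) * Complex.I := by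
    push_cast; ring
  have h2 : (1/2 : ℂ) = ((1/2 : ℝ) : ℂ) := by push_cast; rfl
  rw [thetaTerm, Complex.norm_exp]
  congr 1
  simp only [hc]
  rw [hI, h2, mul_assoc, Complex.re_ofReal_mul, Complex.I_mul_re, Complex.add_im,
    Complex.im_ofReal_mul, Complex.im_sum, Complex.im_sum]
  simp only [Complex.im_sum, Complex.im_ofReal_mul, Complex.im_mul_ofReal, Matrix.map_apply]
  ring

lemma aux_bound (g N : ℕ) (P : Matrix (Fin g) (Fin g) ℂ) (μ : Fin g → ℤ) (c : ℝ)
    (hc : ∀ x : Fin g → ℝ, c * ∑ j, x j ^ 2 ≤ ∑ j, ∑ k, x j * (P.map Complex.im) j k * x k)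
    (R : ℝ) (z : Fin g → ℂ) (hz : ‖z‖ ≤ R) (n : Fin g → ℤ) :
    ‖thetaTerm g N P μ z n‖ ≤ ∏ j, Real.exp (-(Real.pi * N * c) * ((μ j : ℝ) / N + n j)^2
      + 2 * Real.pi * N * R * |(μ j : ℝ) / N + n j|) := by
  rw [aux_norm, ← Real.exp_sum, Real.exp_le_exp, Finset.sum_add_distrib, ← Finset.mul_sum,
    ← Finset.mul_sum]
  have h1 := hc (fun j => (μ j : ℝ) / N + n j)
  have h2 : -∑ j, ((μ j : ℝ) / N + n j) * (z j).im ≤ R * ∑ j, |(μ j : ℝ) / N + n j| := by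
    rw [← Finset.sum_neg_distrib, Finset.mul_sum]
    refine Finset.sum_le_sum fun j _ => ?_
    refine (neg_le_abs _).trans ?_
    rw [abs_mul, mul_comm]
    have := ((Complex.abs_im_le_norm (z j)).trans (norm_le_pi_norm z j)).trans hz
    gcongr
  have hp : 0 ≤ Real.pi * N := by positivity
  have h3 := mul_le_mul_of_nonneg_left h1 hp
  have h4 := mul_le_mul_of_nonneg_left h2 hp
  linarith

/-- The theta series `θ_μ^Π : ℂ^g → ℂ` is holomorphic, i.e. complex differentiable at
every point. -/
theorem theta_holomorphic (g N : ℕ) (hg : 1 ≤ g) (hN0 : 0 < N) (hN : Even N)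
    (P : Matrix (Fin g) (Fin g) ℂ) (hsym : P.IsSymm)
    (hpos : (P.map Complex.im).PosDef) (μ : Fin g → ℤ) :
    Differentiable ℂ (theta g N P μ) := by
  obtain ⟨c, hc0, hc⟩ := aux_posdef g hg _ hpos
  have hNp : (0:ℝ) < N := by exact_mod_cast hN0
  have hsum : ∀ R : ℝ, Summable (fun n : Fin g → ℤ => ∏ j,
      Real.exp (-(Real.pi * N * c) * ((μ j : ℝ) / N + n j)^2
      + 2 * Real.pi * N * R * |(μ j : ℝ) / N + n j|)) := fun R =>
    aux_summable_pi g (fun j m => Real.exp (-(Real.pi * N * c) * ((μ j : ℝ) / N + m)^2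
      + 2 * Real.pi * N * R * |(μ j : ℝ) / N + m|)) (fun j m => (Real.exp_pos _).le)
      (fun j => aux_summable_one _ _ _ (by positivity))
  intro z₀
  set R := ‖z₀‖ + 1 with hR
  let L : (Fin g → ℤ) → ((Fin g → ℂ) →L[ℂ] ℂ) := fun n =>
    (2 * Real.pi * Complex.I * N : ℂ) • ∑ j, ((μ j : ℂ) / N + (n j : ℂ)) •
      ContinuousLinearMap.proj (R := ℂ) (φ := fun _ : Fin g => ℂ) j
  have hL : ∀ n, ‖L n‖ ≤ Real.exp (2 * Real.pi * N * ∑ j, |(μ j : ℝ) / N + n j|) := by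
    intro n
    refine le_trans ?_ ((le_add_of_nonneg_right zero_le_one).trans (Real.add_one_le_exp _))
    refine ContinuousLinearMap.opNorm_le_bound _ (by positivity) fun x => ?_
    simp only [L, ContinuousLinearMap.smul_apply, ContinuousLinearMap.sum_apply,
      ContinuousLinearMap.proj_apply, smul_eq_mul, norm_mul]
    have h1 : ‖∑ j, ((μ j : ℂ) / N + (n j : ℂ)) * x j‖ ≤
        (∑ j, |(μ j : ℝ) / N + n j|) * ‖x‖ := by
      refine (norm_sum_le _ _).trans ?_
      rw [Finset.sum_mul]
      refine Finset.sum_le_sum fun j _ => ?_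
      have hc : ((μ j : ℂ) / N + (n j : ℂ)) = (((μ j : ℝ) / N + n j : ℝ) : ℂ) := by
        push_cast; rfl
      rw [norm_mul, hc, Complex.norm_real, Real.norm_eq_abs]
      gcongr
      exact norm_le_pi_norm x j
    have h2 : ‖(2:ℂ)‖ * ‖(Real.pi : ℂ)‖ * ‖Complex.I‖ * ‖(N:ℂ)‖ = 2 * Real.pi * N := by
      simp [abs_of_pos Real.pi_pos]
    rw [h2, mul_assoc (2 * Real.pi * N : ℝ)]
    gcongr
  have hder : ∀ n z, HasFDerivAt (fun z => thetaTerm g N P μ z n)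
      (thetaTerm g N P μ z n • L n) z := by
    intro n z
    have h1 : HasFDerivAt (fun z : Fin g → ℂ => 2 * Real.pi * Complex.I * N *
        ((1 / 2) * ∑ j, ∑ k, ((μ j : ℂ) / N + (n j : ℂ)) * P j k * ((μ k : ℂ) / N + (n k : ℂ))
        + ∑ j, ((μ j : ℂ) / N + (n j : ℂ)) * z j)) (L n) z := by
      refine HasFDerivAt.const_mul ?_ _
      refine HasFDerivAt.const_add _ ?_
      refine HasFDerivAt.fun_sum fun j _ => ?_
      exact HasFDerivAt.const_mul (hasFDerivAt_apply j z) _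
    exact h1.cexp
  refine (hasFDerivAt_tsum_of_isPreconnected (hsum (R + 1)) (s := Metric.ball 0 R)
    (f := fun n z => thetaTerm g N P μ z n) (f' := fun n z => thetaTerm g N P μ z n • L n)
    Metric.isOpen_ball (convex_ball _ _).isPreconnected (fun n z _ => hder n z) ?_
    (x₀ := z₀) (by simp [hR]) ?_ (x := z₀) (by simp [hR])).differentiableAt
  · intro n z hz
    have hz' : ‖z‖ ≤ R := by simpa using (mem_ball_zero_iff.1 hz).le
    rw [norm_smul]
    refine (mul_le_mul (aux_bound g N P μ c hc R z hz' n) (hL n) (norm_nonneg _)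
      (Finset.prod_nonneg fun _ _ => (Real.exp_pos _).le)).trans (le_of_eq ?_)
    rw [← Real.exp_sum, ← Real.exp_sum, ← Real.exp_add, Finset.mul_sum,
      ← Finset.sum_add_distrib]
    congr 1
    refine Finset.sum_congr rfl fun j _ => ?_
    ring
  · exact Summable.of_norm_bounded (hsum R)
      (fun n => aux_bound g N P μ c hc R z₀ (by simp [hR]) n)
end

section
/- Let g ≥ 1 be an integer, N a positive even integer, and Π a symmetric g×g complex matrix whose imaginary part Π_I is positive definite. Then for all μ, ν ∈ {0,1,…,N−1}^g, (2N)^{g/2} (det Π_I)^{1/2} ∫_{[0,1]^{2g}} θ_μ^Π(x + Πy) · conj(θ_ν^Π(x + Πy)) · exp(−2πN y^T Π_I y) dx dy equals 1 if μ = ν and equals 0 if μ ≠ ν; i.e., the theta series are orthonormal with respect to the inner product ⟨⟨f,g⟩⟩ = (2N)^{g/2}(det Π_I)^{1/2} ∫_{[0,1]^{2g}} f(x+Πy) conj(g(x+Πy)) e^{−2πN y^T Π_I y} dx dy. -/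
open scoped BigOperators

open MeasureTheory


abbrev thCube (g : ℕ) : Set (Fin g → ℝ) := Set.univ.pi fun _ : Fin g => Set.Icc (0 : ℝ) 1

def thQ {g : ℕ} (M : Matrix (Fin g) (Fin g) ℝ) (v : Fin g → ℝ) : ℝ :=
  ∑ j, ∑ k, v j * M j k * v k

lemma th_one_dim (k : ℤ) :
    ∫ x in Set.Icc (0:ℝ) 1, Complex.exp (2 * Real.pi * Complex.I * (k * (x:ℂ))) =
      if k = 0 then 1 else 0 := by
  rw [integral_Icc_eq_integral_Ioc, ← intervalIntegral.integral_of_le zero_le_one]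
  split_ifs with h
  · simp [h]
  · have hc : (2 * Real.pi * Complex.I * k : ℂ) ≠ 0 := by
      have := Complex.two_pi_I_ne_zero
      simp [h, Real.pi_ne_zero]
    have := integral_exp_mul_complex (a := 0) (b := 1) hc
    simp only [← mul_assoc]
    rw [this]
    have h1 : Complex.exp (2 * Real.pi * Complex.I * k) = 1 := by
      rw [mul_comm]; exact Complex.exp_int_mul_two_pi_mul_I k
    simp [h1]

lemma th_char {g : ℕ} (k : Fin g → ℤ) :
    ∫ x in thCube g, Complex.exp (2 * Real.pi * Complex.I * ∑ j, (k j : ℂ) * (x j : ℂ)) =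
      if k = 0 then 1 else 0 := by
  simp_rw [Finset.mul_sum, Complex.exp_sum]
  rw [volume_pi, Measure.restrict_pi_pi]
  rw [integral_fintype_prod_eq_prod (fun j (x:ℝ) => Complex.exp (2 * Real.pi * Complex.I * (k j * (x:ℂ))))]
  simp_rw [th_one_dim]
  rw [Finset.prod_ite_zero]
  simp [funext_iff]

lemma th_factor {g : ℕ} {M : Matrix (Fin g) (Fin g) ℝ} (hM : M.PosDef) :
    ∃ B : Matrix (Fin g) (Fin g) ℝ, M.det = B.det ^ 2 ∧ B.det ≠ 0 ∧
      ∀ v, thQ M v = ∑ j, (B.mulVec v j) ^ 2 := by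
  obtain ⟨B, hB⟩ : ∃ B : Matrix (Fin g) (Fin g) ℝ, M = star B * B := by
    open scoped MatrixOrder Matrix.Norms.L2Operator in
    exact CStarAlgebra.nonneg_iff_eq_star_mul_self.mp hM.posSemidef.nonneg
  have hd : M.det = B.det ^ 2 := by
    rw [hB, Matrix.det_mul, Matrix.star_eq_conjTranspose, Matrix.det_conjTranspose]
    simp [sq]
  refine ⟨B, hd, ?_, ?_⟩
  · intro h
    have := hM.det_pos
    rw [hd, h] at this
    simp at this
  · intro v
    have h1 : thQ M v = v ⬝ᵥ (M.mulVec v) := by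
      simp only [thQ, dotProduct, Matrix.mulVec, Finset.mul_sum, mul_assoc]
    rw [h1, hB, ← Matrix.mulVec_mulVec, Matrix.dotProduct_mulVec, Matrix.star_eq_conjTranspose,
      Matrix.conjTranspose_eq_transpose_of_trivial, Matrix.vecMul_transpose]
    simp [dotProduct, sq]

lemma th_gauss {g : ℕ} {M : Matrix (Fin g) (Fin g) ℝ} (hM : M.PosDef) (b : ℝ) :
    ∫ v : Fin g → ℝ, Real.exp (-b * thQ M v) = (Real.sqrt (Real.pi / b)) ^ g / Real.sqrt M.det := by
  obtain ⟨B, hd, h0, hQ⟩ := th_factor hM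
  have hmap := Real.map_matrix_volume_pi_eq_smul_volume_pi h0
  have hcont : Continuous (Matrix.toLin' B) := LinearMap.continuous_on_pi _
  have h1 : ∫ v : Fin g → ℝ, Real.exp (-b * thQ M v) =
      ∫ w, Real.exp (-b * ∑ j, (w j)^2) ∂(Measure.map (Matrix.toLin' B) volume) := by
    rw [integral_map hcont.aemeasurable]
    · simp [hQ]
    · exact Continuous.aestronglyMeasurable (by fun_prop)
  rw [h1, hmap, integral_smul_measure]
  simp_rw [Finset.mul_sum, Real.exp_sum]
  rw [integral_fintype_prod_volume_eq_pow (fun x : ℝ => Real.exp (-b * x ^ 2)), integral_gaussian, hd, Real.sqrt_sq_eq_abs]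
  simp [div_eq_inv_mul, abs_inv]

lemma th_gauss_int {g : ℕ} {M : Matrix (Fin g) (Fin g) ℝ} (hM : M.PosDef) {b : ℝ} (hb : 0 < b) :
    Integrable (fun v : Fin g → ℝ => Real.exp (-b * thQ M v)) := by
  apply Integrable.of_integral_ne_zero
  rw [th_gauss hM b]
  have := hM.det_pos
  have := Real.pi_pos
  positivity

lemma th_lower {g : ℕ} {M : Matrix (Fin g) (Fin g) ℝ} (hM : M.PosDef) :
    ∃ c : ℝ, 0 < c ∧ ∀ v, c * ∑ j, (v j)^2 ≤ thQ M v := by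
  obtain ⟨B, hd, h0, hQ⟩ := th_factor hM
  set C : ℝ := ∑ j, ∑ k, (B⁻¹ j k)^2 with hC
  have hC0 : 0 ≤ C := by positivity
  refine ⟨(C + 1)⁻¹, by positivity, fun v => ?_⟩
  rw [inv_mul_le_iff₀ (by positivity), hQ]
  have hv : v = B⁻¹.mulVec (B.mulVec v) := by
    rw [Matrix.mulVec_mulVec, Matrix.nonsing_inv_mul _ (isUnit_iff_ne_zero.mpr h0), Matrix.one_mulVec]
  have hS : 0 ≤ ∑ j, (B.mulVec v j)^2 := by positivity
  calc ∑ j, (v j)^2 ≤ ∑ j, (∑ k, (B⁻¹ j k)^2) * ∑ k, (B.mulVec v k)^2 := by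
        apply Finset.sum_le_sum
        intro j _
        conv_lhs => rw [hv]
        exact Finset.sum_mul_sq_le_sq_mul_sq Finset.univ (fun k => B⁻¹ j k) (B.mulVec v)
    _ = C * ∑ k, (B.mulVec v k)^2 := by rw [hC, Finset.sum_mul]
    _ ≤ _ := by nlinarith

lemma th_summable_prod {f : ℤ → ℝ} (hf : Summable f) (h0 : ∀ n, 0 ≤ f n) (g : ℕ) :
    Summable fun n : Fin g → ℤ => ∏ j, f (n j) := by
  induction g with
  | zero => exact Summable.of_finite
  | succ g ih =>
    rw [← (Fin.consEquiv (fun _ : Fin (g+1) => ℤ)).summable_iff]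
    have := hf.mul_of_nonneg ih h0 (fun n => Finset.prod_nonneg fun j _ => h0 _)
    convert this using 2 with p
    simp [Fin.prod_univ_succ, Fin.consEquiv]

lemma th_bound {g : ℕ} {M : Matrix (Fin g) (Fin g) ℝ} (hM : M.PosDef) {b : ℝ} (hb : 0 < b)
    (a : Fin g → ℝ) :
    ∃ B : (Fin g → ℤ) → ℝ, Summable B ∧ ∀ n, ∀ y ∈ thCube g,
      Real.exp (-b * thQ M (fun j => a j + n j + y j)) ≤ B n := by
  obtain ⟨c, hc, hlow⟩ := th_lower hM
  set D : ℝ := ∑ j, (|a j| + 1)^2 with hD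
  have hs : Summable fun n : ℤ => Real.exp (-(b * c / 2) * (n:ℝ)^2) := by
    have h := summable_pow_mul_jacobiTheta₂_term_bound 0 (T := b * c / 2 / Real.pi) (by have := Real.pi_pos; positivity) 0
    convert h using 2 with n
    have := Real.pi_ne_zero
    simp
    field_simp
  refine ⟨fun n => Real.exp (b * c * D) * ∏ j, Real.exp (-(b * c / 2) * (n j:ℝ)^2),
    (th_summable_prod hs (fun _ => (Real.exp_pos _).le) g).mul_left _, fun n y hy => ?_⟩
  beta_reduce
  rw [← Real.exp_sum, ← Real.exp_add, Real.exp_le_exp, ← Finset.mul_sum]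
  have key : ∑ j, (n j : ℝ)^2 / 2 - D ≤ ∑ j, (a j + n j + y j)^2 := by
    rw [hD, ← Finset.sum_sub_distrib]
    apply Finset.sum_le_sum
    intro j _
    have hyj := hy j (Set.mem_univ _)
    have h1 : |a j + y j| ≤ |a j| + 1 :=
      (abs_add_le _ _).trans (by gcongr; rw [abs_of_nonneg hyj.1]; exact hyj.2)
    have h2 : (a j + y j)^2 ≤ (|a j| + 1)^2 := sq_le_sq.mpr (h1.trans (le_abs_self _))
    nlinarith [sq_nonneg ((n j : ℝ) + 2 * (a j + y j))]
  have h2 := hlow (fun j => a j + n j + y j)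
  have h3 : b * (c * (∑ j, (n j : ℝ)^2 / 2 - D)) ≤ b * thQ M (fun j => a j + n j + y j) := by
    gcongr
    exact (by gcongr : c * (∑ j, (n j : ℝ)^2 / 2 - D) ≤ _).trans h2
  rw [← Finset.sum_div] at h3
  nlinarith

lemma th_unfold {g : ℕ} {f : (Fin g → ℝ) → ℝ} (hf : Integrable f) (a : Fin g → ℝ) :
    HasSum (fun n : Fin g → ℤ => ∫ y in thCube g, f (fun j => a j + n j + y j)) (∫ v, f v) := by
  set s : (Fin g → ℤ) → Set (Fin g → ℝ) := fun n => {y | ∀ j, ⌊y j⌋ = n j} with hs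
  have hs' : ∀ n, s n = Set.univ.pi fun j => Set.Ico (n j : ℝ) (n j + 1) := by
    intro n; ext y; simp [hs, Int.floor_eq_iff]
  set F : (Fin g → ℝ) → ℝ := fun v => f (a + v) with hF
  have hFi : Integrable F := hf.comp_add_left a
  have hU : (⋃ n, s n) = Set.univ := by
    ext y; simp only [hs, Set.mem_iUnion, Set.mem_ofPred_eq, Set.mem_univ, iff_true]
    exact ⟨fun j => ⌊y j⌋, fun j => rfl⟩
  have h := hasSum_integral_iUnion (μ := volume) (f := F) (s := s)
    (fun n => by rw [hs']; exact MeasurableSet.univ_pi fun j => measurableSet_Ico)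
    (fun n m hnm => by
      refine Set.disjoint_left.mpr fun y hy hy' => hnm ?_
      ext j; rw [← hy j, hy' j]) hFi.integrableOn
  rw [hU, setIntegral_univ] at h
  have h2 : ∫ v, F v = ∫ v, f v := integral_add_left_eq_self f a
  rw [h2] at h
  suffices hh : ∀ n : Fin g → ℤ, ∫ x in s n, F x = ∫ y in thCube g, f (fun j => a j + n j + y j) by
    simpa only [hh] using h
  intro n
  have hmp := measurePreserving_add_left (volume : Measure (Fin g → ℝ)) (fun j => (n j : ℝ))
  rw [← hmp.setIntegral_preimage_emb (measurableEmbedding_addLeft _)]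
  have h3 : (fun x : Fin g → ℝ => (fun j => (n j : ℝ)) + x) ⁻¹' s n =
      Set.univ.pi fun _ => Set.Ico (0:ℝ) 1 := by
    ext y; simp [hs']
  rw [h3]
  have h4 : (thCube g) =ᵐ[volume] (Set.univ.pi fun _ : Fin g => Set.Ico (0:ℝ) 1) := by
    rw [thCube, Set.pi_univ_Icc]
    exact (Measure.univ_pi_Ico_ae_eq_Icc (μ := fun _ : Fin g => (volume : Measure ℝ))
      (f := fun _ => (0:ℝ)) (g := fun _ => 1)).symm
  rw [← setIntegral_congr_set h4]
  congr 1
  ext y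
  simp only [hF]
  congr 1
  ext j
  simp [add_assoc]

/-- The `y`-part of a theta term, with the square root of the Gaussian weight. -/
noncomputable def thU {g : ℕ} (N : ℕ) (P : Matrix (Fin g) (Fin g) ℂ) (a y : Fin g → ℝ) : ℂ :=
  Complex.exp (Real.pi * Complex.I * N *
    (∑ j, ∑ k, (a j : ℂ) * P j k * (a k : ℂ) + 2 * ∑ j, (a j : ℂ) * ∑ k, P j k * (y k : ℂ))) *
  (Real.exp (-(Real.pi * N) * thQ (P.map Complex.im) y) : ℂ)

lemma thU_cont {g : ℕ} (N : ℕ) (P : Matrix (Fin g) (Fin g) ℂ) (a : Fin g → ℝ) :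
    Continuous (thU N P a) := by
  unfold thU thQ
  fun_prop

lemma thU_norm {g : ℕ} (N : ℕ) (P : Matrix (Fin g) (Fin g) ℂ) (hsym : P.IsSymm) (a y : Fin g → ℝ) :
    ‖thU N P a y‖ = Real.exp (-(Real.pi * N) * thQ (P.map Complex.im) (fun j => a j + y j)) := by
  unfold thU
  rw [norm_mul, Complex.norm_exp, Complex.norm_real, Real.norm_eq_abs, Real.abs_exp, ← Real.exp_add]
  congr 1
  set w : ℂ := ∑ j, ∑ k, (a j : ℂ) * P j k * (a k : ℂ) +
    2 * ∑ j, (a j : ℂ) * ∑ k, P j k * (y k : ℂ) with hw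
  have h1 : (Real.pi * Complex.I * N * w).re = -(Real.pi * N) * w.im := by
    have : (Real.pi * Complex.I * N * w : ℂ) = ((Real.pi * N : ℝ) : ℂ) * (Complex.I * w) := by
      push_cast; ring
    rw [this, Complex.re_ofReal_mul]; simp
  have h2 : w.im = ∑ j, ∑ k, a j * (P j k).im * a k + 2 * ∑ j, ∑ k, a j * (P j k).im * y k := by
    simp [hw, Complex.im_sum, Finset.mul_sum, mul_assoc]
  have h3 : ∑ j, ∑ k, y j * (P j k).im * a k = ∑ j, ∑ k, a j * (P j k).im * y k := by
    rw [Finset.sum_comm]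
    refine Finset.sum_congr rfl fun j _ => Finset.sum_congr rfl fun k _ => ?_
    rw [hsym.apply]; ring
  have h4 : thQ (P.map Complex.im) (fun j => a j + y j) =
      ∑ j, ∑ k, a j * (P j k).im * a k + ∑ j, ∑ k, a j * (P j k).im * y k +
      ∑ j, ∑ k, y j * (P j k).im * a k + thQ (P.map Complex.im) y := by
    simp only [thQ, ← Finset.sum_add_distrib, Matrix.map_apply]
    refine Finset.sum_congr rfl fun j _ => Finset.sum_congr rfl fun k _ => ?_
    ring
  rw [h1, h2, h4, h3]; ring

lemma th_term {g N : ℕ} (hN0 : 0 < N) (P : Matrix (Fin g) (Fin g) ℂ) (μ n : Fin g → ℤ)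
    (x y : Fin g → ℝ) :
    thetaTerm g N P μ (fun j => (x j : ℂ) + ∑ k, P j k * (y k : ℂ)) n *
      (Real.exp (-(Real.pi * N) * thQ (P.map Complex.im) y) : ℂ) =
    Complex.exp (2 * Real.pi * Complex.I * ∑ j, ((μ j + N * n j : ℤ) : ℂ) * (x j : ℂ)) *
      thU N P (fun j => (μ j : ℝ) / N + n j) y := by
  unfold thetaTerm thU
  rw [← mul_assoc, ← Complex.exp_add]
  congr 2
  have hN : (N : ℂ) ≠ 0 := by exact_mod_cast hN0.ne'
  have h1 : ∑ j, ((μ j + N * n j : ℤ) : ℂ) * (x j : ℂ) =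
      N * ∑ j, ((μ j : ℂ) / N + n j) * x j := by
    rw [Finset.mul_sum]
    refine Finset.sum_congr rfl fun j _ => ?_
    push_cast; field_simp
  have h2 : ∀ z : Fin g → ℂ, ∑ j, ((μ j : ℂ) / N + n j) * (x j + z j) =
      ∑ j, ((μ j : ℂ) / N + n j) * x j + ∑ j, ((μ j : ℂ) / N + n j) * z j := fun z => by
    rw [← Finset.sum_add_distrib]
    exact Finset.sum_congr rfl fun j _ => mul_add _ _ _
  rw [h1, h2]
  push_cast
  ring

lemma th_vol (g : ℕ) : volume.real (thCube g) = 1 := by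
  rw [Measure.real, thCube, volume_pi_pi]
  simp

/-- Termwise integration of a dominated series over the cube. -/
lemma th_swap {g : ℕ} {ι : Type*} [Countable ι] (F : ι → (Fin g → ℝ) → ℂ)
    (hF : ∀ i, Continuous (F i)) (B : ι → ℝ) (hB : Summable B)
    (hb : ∀ i, ∀ y ∈ thCube g, ‖F i y‖ ≤ B i) :
    ∫ y in thCube g, ∑' i, F i y = ∑' i, ∫ y in thCube g, F i y := by
  have hc : IsCompact (thCube g) := isCompact_univ_pi fun _ => isCompact_Icc
  have hm : MeasurableSet (thCube g) := hc.measurableSet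
  have hv : volume.real (thCube g) = 1 := th_vol g
  have hi : ∀ i, IntegrableOn (F i) (thCube g) := fun i => (hF i).continuousOn.integrableOn_compact hc
  refine (integral_tsum_of_summable_integral_norm hi ?_).symm
  refine Summable.of_nonneg_of_le (fun i => integral_nonneg fun _ => norm_nonneg _) (fun i => ?_) hB
  calc ∫ y in thCube g, ‖F i y‖ ≤ ∫ y in thCube g, B i :=
        setIntegral_mono_on (hi i).norm (integrableOn_const hc.measure_lt_top.ne) hm (hb i)
    _ = B i := by rw [setIntegral_const, hv, one_smul]

/-- Orthonormality of the theta series with respect to the inner product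
`⟨⟨f,h⟩⟩ = (2N)^{g/2}(det Π_I)^{1/2} ∫_{[0,1]^{2g}} f(x+Πy) conj(h(x+Πy)) e^{−2πN yᵀΠ_I y} dx dy`. -/
theorem theta_orthonormal (g N : ℕ) (hg : 1 ≤ g) (hN0 : 0 < N) (hN : Even N)
    (P : Matrix (Fin g) (Fin g) ℂ) (hsym : P.IsSymm)
    (hpos : (P.map Complex.im).PosDef)
    (μ ν : Fin g → ℤ) (hμ : ∀ j, 0 ≤ μ j ∧ μ j < N) (hν : ∀ j, 0 ≤ ν j ∧ ν j < N) :
    (((2 * (N : ℝ)) ^ ((g : ℝ) / 2) * Real.sqrt ((P.map Complex.im).det) : ℝ) : ℂ) *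
      ∫ x in Set.univ.pi fun _ : Fin g => Set.Icc (0 : ℝ) 1,
        ∫ y in Set.univ.pi fun _ : Fin g => Set.Icc (0 : ℝ) 1,
          theta g N P μ (fun j => (x j : ℂ) + ∑ k, P j k * (y k : ℂ)) *
            (starRingEnd ℂ) (theta g N P ν (fun j => (x j : ℂ) + ∑ k, P j k * (y k : ℂ))) *
            (Real.exp (-(2 * Real.pi * N) * ∑ j, ∑ k, y j * (P j k).im * y k) : ℂ)
      = if μ = ν then 1 else 0 := by
  have hNr : (0:ℝ) < N := by exact_mod_cast hN0
  have hpi := Real.pi_pos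
  have hb : 0 < Real.pi * N := by positivity
  set M := P.map Complex.im with hM
  set A : (Fin g → ℤ) → (Fin g → ℤ) → Fin g → ℝ := fun μ n j => (μ j : ℝ) / N + n j with hA
  set E : (Fin g → ℤ) → (Fin g → ℝ) → ℂ := fun k x =>
    Complex.exp (2 * Real.pi * Complex.I * ∑ j, ((k j : ℤ) : ℂ) * (x j : ℂ)) with hE
  set K : (Fin g → ℤ) → (Fin g → ℤ) → (Fin g → ℤ) := fun μ n j => μ j + N * n j with hK
  have hEn : ∀ k x, ‖E k x‖ = 1 := by
    intro k x
    have : (2 * Real.pi * Complex.I * ∑ j, ((k j : ℤ) : ℂ) * (x j : ℂ)) =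
      ((2 * Real.pi * ∑ j, (k j : ℝ) * x j : ℝ) : ℂ) * Complex.I := by push_cast; ring
    simp only [hE]
    rw [this, Complex.norm_exp_ofReal_mul_I]
  have hEc : ∀ k, Continuous (E k) := fun k => by simp only [hE]; fun_prop
  have hEE : ∀ k l x, E k x * (starRingEnd ℂ) (E l x) = E (k - l) x := by
    intro k l x
    simp only [hE]
    rw [← Complex.exp_conj, ← Complex.exp_add]
    congr 1
    have h2 : (starRingEnd ℂ) 2 = 2 := Complex.conj_ofNat 2
    simp [map_sum, sub_mul, Finset.sum_sub_distrib, h2]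
    ring
  have hbd : ∀ μ : Fin g → ℤ, ∃ B : (Fin g → ℤ) → ℝ, Summable B ∧ ∀ n, ∀ y ∈ thCube g,
      ‖thU N P (A μ n) y‖ ≤ B n := by
    intro μ
    obtain ⟨B, h1, h2⟩ := th_bound hpos hb (fun j => (μ j : ℝ) / N)
    refine ⟨B, h1, fun n y hy => ?_⟩
    rw [thU_norm N P hsym]
    exact h2 n y hy
  obtain ⟨B, hB, hBb⟩ := hbd μ
  obtain ⟨C, hC, hCb⟩ := hbd ν
  have hcube : (0 : Fin g → ℝ) ∈ thCube g := fun j _ => by simp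
  have hB0 : ∀ n, 0 ≤ B n := fun n => (norm_nonneg _).trans (hBb n 0 hcube)
  have hC0 : ∀ n, 0 ≤ C n := fun n => (norm_nonneg _).trans (hCb n 0 hcube)
  have hBC : Summable fun p : (Fin g → ℤ) × (Fin g → ℤ) => B p.1 * C p.2 :=
    hB.mul_of_nonneg hC hB0 hC0
  set r : (Fin g → ℤ) × (Fin g → ℤ) → (Fin g → ℝ) → ℂ := fun p y =>
    thU N P (A μ p.1) y * (starRingEnd ℂ) (thU N P (A ν p.2) y) with hr
  have hrc : ∀ p, Continuous (r p) := fun p =>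
    (thU_cont N P _).mul (Complex.continuous_conj.comp (thU_cont N P _))
  have hrb : ∀ p, ∀ y ∈ thCube g, ‖r p y‖ ≤ B p.1 * C p.2 := by
    intro p y hy
    simp only [hr]
    rw [norm_mul, RCLike.norm_conj]
    exact mul_le_mul (hBb _ y hy) (hCb _ y hy) (norm_nonneg _) (hB0 _)
  have hcomp : IsCompact (thCube g) := isCompact_univ_pi fun _ => isCompact_Icc
  have hcm : MeasurableSet (thCube g) := hcomp.measurableSet
  have hv : volume.real (thCube g) = 1 := th_vol g
  -- the integrand as a double series
  have hint : ∀ x, ∀ y ∈ thCube g,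
      theta g N P μ (fun j => (x j : ℂ) + ∑ k, P j k * (y k : ℂ)) *
            (starRingEnd ℂ) (theta g N P ν (fun j => (x j : ℂ) + ∑ k, P j k * (y k : ℂ))) *
            (Real.exp (-(2 * Real.pi * N) * ∑ j, ∑ k, y j * (P j k).im * y k) : ℂ) =
      ∑' p : (Fin g → ℤ) × (Fin g → ℤ), E (K μ p.1 - K ν p.2) x * r p y := by
    intro x y hy
    set G : ℂ := (Real.exp (-(Real.pi * N) * thQ (P.map Complex.im) y) : ℂ) with hG
    have hGG : (Real.exp (-(2 * Real.pi * N) * ∑ j, ∑ k, y j * (P j k).im * y k) : ℂ) = 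
        G * (starRingEnd ℂ) G := by
      rw [hG, Complex.conj_ofReal, ← Complex.ofReal_mul, ← Real.exp_add]
      congr 2
      simp only [thQ, Matrix.map_apply]; ring
    have ht : ∀ μ, theta g N P μ (fun j => (x j : ℂ) + ∑ k, P j k * (y k : ℂ)) * G =
        ∑' n, E (K μ n) x * thU N P (A μ n) y := by
      intro μ
      rw [theta, ← tsum_mul_right]
      exact tsum_congr fun n => th_term hN0 P μ n x y
    have hsum : ∀ μ, Summable fun n => ‖E (K μ n) x * thU N P (A μ n) y‖ := by
      intro μ
      obtain ⟨B, hB, hBb⟩ := hbd μ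
      refine Summable.of_nonneg_of_le (fun _ => norm_nonneg _) (fun n => ?_) hB
      rw [norm_mul, hEn, one_mul]
      exact hBb n y hy
    rw [hGG]
    trans (theta g N P μ (fun j => (x j : ℂ) + ∑ k, P j k * (y k : ℂ)) * G) *
      (starRingEnd ℂ) (theta g N P ν (fun j => (x j : ℂ) + ∑ k, P j k * (y k : ℂ)) * G)
    · rw [map_mul]; ring
    rw [ht, ht, Complex.conj_tsum, tsum_mul_tsum_of_summable_norm (hsum μ)
      (by simpa only [RCLike.norm_conj] using hsum ν)]
    refine tsum_congr fun p => ?_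
    rw [← hEE, map_mul]
    simp only [hr]
    ring
  have hinner : ∀ x : Fin g → ℝ, ∫ y in thCube g,
      theta g N P μ (fun j => (x j : ℂ) + ∑ k, P j k * (y k : ℂ)) *
            (starRingEnd ℂ) (theta g N P ν (fun j => (x j : ℂ) + ∑ k, P j k * (y k : ℂ))) *
            (Real.exp (-(2 * Real.pi * N) * ∑ j, ∑ k, y j * (P j k).im * y k) : ℂ) =
      ∑' p : (Fin g → ℤ) × (Fin g → ℤ), E (K μ p.1 - K ν p.2) x * ∫ y in thCube g, r p y := by
    intro x
    rw [setIntegral_congr_fun hcm (hint x), th_swap _ _ _ hBC]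
    · exact tsum_congr fun p => integral_const_mul _ _
    · intro p y hy
      rw [norm_mul, hEn, one_mul]
      exact hrb p y hy
    · exact fun p => continuous_const.mul (hrc p)
  have houter : (∫ x in thCube g, ∫ y in thCube g,
      theta g N P μ (fun j => (x j : ℂ) + ∑ k, P j k * (y k : ℂ)) *
            (starRingEnd ℂ) (theta g N P ν (fun j => (x j : ℂ) + ∑ k, P j k * (y k : ℂ))) *
            (Real.exp (-(2 * Real.pi * N) * ∑ j, ∑ k, y j * (P j k).im * y k) : ℂ)) =
      ∑' p : (Fin g → ℤ) × (Fin g → ℤ),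
        (if K μ p.1 - K ν p.2 = 0 then 1 else 0) * ∫ y in thCube g, r p y := by
    simp_rw [hinner]
    rw [th_swap _ _ _ hBC]
    · refine tsum_congr fun p => ?_
      rw [integral_mul_const, hE, th_char]
    · intro p x hx
      rw [norm_mul, hEn, one_mul]
      refine (norm_setIntegral_le_of_norm_le_const hcomp.measure_lt_top (hrb p)).trans ?_
      rw [hv, mul_one]
    · exact fun p => (hEc _).mul continuous_const
  have hKK : ∀ n m, K μ n - K ν m = 0 ↔ μ = ν ∧ n = m := by
    intro n m
    constructor
    · intro h
      have h1 : ∀ j, μ j + N * n j = ν j + N * m j := fun j => by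
        have := congrFun h j
        simp only [hK, Pi.sub_apply, Pi.zero_apply] at this
        linarith
      have h2 : ∀ j, μ j = ν j := fun j => by
        have := congrArg (· % (N : ℤ)) (h1 j)
        simp only [Int.add_mul_emod_self_left] at this
        rwa [Int.emod_eq_of_lt (hμ j).1 (hμ j).2, Int.emod_eq_of_lt (hν j).1 (hν j).2] at this
      refine ⟨funext h2, funext fun j => ?_⟩
      have h3 := h1 j
      rw [h2 j] at h3
      have hNz : (N : ℤ) ≠ 0 := by exact_mod_cast hN0.ne'
      exact mul_left_cancel₀ hNz (by linarith)
    · rintro ⟨rfl, rfl⟩; simp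
  change _ * (∫ x in thCube g, ∫ y in thCube g, _) = _
  rw [houter]
  split_ifs with hμν
  · subst hμν
    have hd : ∑' p : (Fin g → ℤ) × (Fin g → ℤ),
        (if K μ p.1 - K μ p.2 = 0 then 1 else 0) * ∫ y in thCube g, r p y =
        ∑' n : Fin g → ℤ, ∫ y in thCube g, r (n, n) y := by
      have hinj : Function.Injective (fun n : Fin g → ℤ => (n, n)) := fun a b h => (Prod.ext_iff.mp h).1
      rw [← hinj.tsum_eq]
      · simp
      · intro p hp
        have : K μ p.1 - K μ p.2 = 0 := by
          by_contra h
          simp [h] at hp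
        exact ⟨p.1, Prod.ext rfl ((hKK _ _).mp this).2⟩
    have hrr : ∀ n, ∫ y in thCube g, r (n, n) y = ((∫ y in thCube g,
        Real.exp (-(2 * (Real.pi * N)) * thQ M (fun j => (μ j : ℝ) / N + n j + y j)) : ℝ) : ℂ) := by
      intro n
      rw [← integral_complex_ofReal]
      congr 1
      ext y
      simp only [hr]
      rw [Complex.mul_conj, Complex.normSq_eq_norm_sq, thU_norm N P hsym, ← Real.exp_nat_mul]
      congr 2
      push_cast; ring
    have hu := th_unfold (th_gauss_int hpos (b := 2 * (Real.pi * N)) (by positivity))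
      (fun j => (μ j : ℝ) / N)
    rw [hd]
    simp_rw [hrr]
    rw [← Complex.ofReal_tsum, hu.tsum_eq, th_gauss hpos, ← Complex.ofReal_mul]
    rw [← Complex.ofReal_one, Complex.ofReal_inj]
    have hdet : 0 < √M.det := Real.sqrt_pos.mpr hpos.det_pos
    have h5 : Real.pi / (2 * (Real.pi * N)) = (2 * (N:ℝ))⁻¹ := by field_simp
    rw [h5, Real.rpow_div_two_eq_sqrt _ (by positivity), Real.rpow_natCast, Real.sqrt_inv, inv_pow]
    have : 0 < √(2 * (N:ℝ)) := by positivity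
    field_simp
  · have : ∀ p : (Fin g → ℤ) × (Fin g → ℤ), ¬ (K μ p.1 - K ν p.2 = 0) := fun p h =>
      hμν ((hKK _ _).mp h).1
    simp [this]
end

section
/- Let g ≥ 1 be an integer, N a positive even integer, and Π a symmetric g×g complex matrix whose imaginary part Π_I is positive definite. Then the family of functions {θ_μ^Π : μ ∈ {0,1,…,N−1}^g} is linearly independent over ℂ in the space of functions ℂ^g → ℂ. -/
open scoped BigOperators

/-- Summability of product families over `Fin g → ℤ`. -/
theorem summable_fin_prod (g : ℕ) (f : Fin g → ℤ → ℝ) (hf0 : ∀ j n, 0 ≤ f j n)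
    (hf : ∀ j, Summable (f j)) : Summable (fun n : Fin g → ℤ => ∏ j, f j (n j)) := by
  induction g with
  | zero => exact Summable.of_finite
  | succ g ih =>
    rw [← (Fin.consEquiv (fun _ => ℤ)).summable_iff]
    have h1 := ih (fun j => f j.succ) (fun j n => hf0 _ _) (fun j => hf _)
    have h2 := (hf 0).mul_of_nonneg h1 (fun n => hf0 _ _)
      (fun n => Finset.prod_nonneg fun j _ => hf0 _ _)
    refine h2.congr fun x => ?_
    simp [Fin.prod_univ_succ, Fin.consEquiv]

theorem quad_coercive (g : ℕ) (A : Matrix (Fin g) (Fin g) ℝ) (hA : A.PosDef) :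
    ∃ c : ℝ, 0 < c ∧ ∀ v : Fin g → ℝ, c * ∑ j, v j ^ 2 ≤ ∑ j, ∑ k, v j * A j k * v k := by
  have hpos : ∀ v : Fin g → ℝ, v ≠ 0 → 0 < ∑ j, ∑ k, v j * A j k * v k := by
    intro v hv
    have := hA.dotProduct_mulVec_pos hv
    simpa [dotProduct, Matrix.mulVec, Finset.mul_sum, mul_assoc] using this
  let S : Set (Fin g → ℝ) := {v | ∑ j, v j ^ 2 = 1}
  have hS : IsCompact S := by
    apply Metric.isCompact_of_isClosed_isBounded
    · exact isClosed_eq (by fun_prop) (by fun_prop)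
    · refine (Metric.isBounded_closedBall (x := (0 : Fin g → ℝ)) (r := 1)).subset ?_
      intro v hv
      rw [mem_closedBall_zero_iff, pi_norm_le_iff_of_nonneg zero_le_one]
      intro j
      have h1 : v j ^ 2 ≤ ∑ j, v j ^ 2 :=
        Finset.single_le_sum (f := fun j => v j ^ 2) (fun i _ => sq_nonneg _) (Finset.mem_univ j)
      have h2 : ∑ j, v j ^ 2 = 1 := hv
      rw [h2] at h1
      exact (sq_le_one_iff_abs_le_one _).1 h1
  have hmin : ∃ c : ℝ, 0 < c ∧ ∀ v ∈ S, c ≤ ∑ j, ∑ k, v j * A j k * v k := by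
    rcases S.eq_empty_or_nonempty with h | h
    · exact ⟨1, one_pos, by simp [h]⟩
    · obtain ⟨u, hu, hm⟩ := hS.exists_isMinOn h
        (f := fun v => ∑ j, ∑ k, v j * A j k * v k) (by fun_prop)
      refine ⟨_, hpos u ?_, fun v hv => hm hv⟩
      rintro rfl
      simp [S] at hu
  obtain ⟨c, hc, hcS⟩ := hmin
  refine ⟨c, hc, fun v => ?_⟩
  by_cases hv : v = 0
  · simp [hv]
  have hs : 0 < ∑ j, v j ^ 2 := by
    obtain ⟨j, hj⟩ := Function.ne_iff.1 hv
    exact Finset.sum_pos' (fun i _ => sq_nonneg _) ⟨j, Finset.mem_univ j, by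
      have : v j ≠ 0 := hj
      positivity⟩
  set s := ∑ j, v j ^ 2 with hsdef
  have hr : Real.sqrt s ^ 2 = s := Real.sq_sqrt hs.le
  have hr0 : Real.sqrt s ≠ 0 := (Real.sqrt_pos.2 hs).ne'
  have hu : (fun j => v j / Real.sqrt s) ∈ S := by
    change ∑ j, (v j / Real.sqrt s) ^ 2 = 1
    simp_rw [div_pow, ← Finset.sum_div, hr, ← hsdef]
    exact div_self hs.ne'
  have h := hcS _ hu
  have h3 : ∑ j, ∑ k, v j / Real.sqrt s * A j k * (v k / Real.sqrt s)
      = (∑ j, ∑ k, v j * A j k * v k) / s := by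
    simp_rw [Finset.sum_div]
    refine Finset.sum_congr rfl fun j _ => Finset.sum_congr rfl fun k _ => ?_
    conv_rhs => rw [← hr]
    field_simp
  rw [h3, le_div_iff₀ hs] at h
  exact h

theorem thetaTerm_zero_norm (g N : ℕ) (P : Matrix (Fin g) (Fin g) ℂ) (μ : Fin g → ℤ)
    (n : Fin g → ℤ) : ‖thetaTerm g N P μ 0 n‖ =
      Real.exp (-Real.pi * N * ∑ j, ∑ k, ((μ j : ℝ) / N + n j) * (P.map Complex.im) j k *
        ((μ k : ℝ) / N + n k)) := by
  rw [thetaTerm, Complex.norm_exp]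
  congr 1
  have h : (∑ j, ∑ k, ((μ j : ℂ) / N + (n j : ℂ)) * P j k * ((μ k : ℂ) / N + (n k : ℂ))).im
      = ∑ j, ∑ k, ((μ j : ℝ) / N + n j) * (P.map Complex.im) j k * ((μ k : ℝ) / N + n k) := by
    rw [Complex.im_sum]
    refine Finset.sum_congr rfl fun j _ => ?_
    rw [Complex.im_sum]
    refine Finset.sum_congr rfl fun k _ => ?_
    have e : ∀ j, ((μ j : ℂ) / N + (n j : ℂ)) = (((μ j : ℝ) / N + n j : ℝ) : ℂ) := by
      intro j; push_cast; rfl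
    rw [e, e, Complex.im_mul_ofReal, Complex.im_ofReal_mul]
    rfl
  rw [← h]
  generalize (∑ j, ∑ k, ((μ j : ℂ) / N + (n j : ℂ)) * P j k * ((μ k : ℂ) / N + (n k : ℂ))) = w
  have : (2 * Real.pi * Complex.I * N *
      ((1 / 2) * w + ∑ j, ((μ j : ℂ) / N + (n j : ℂ)) * (0 : Fin g → ℂ) j) : ℂ)
      = ((Real.pi * N : ℝ) : ℂ) * (Complex.I * w) := by
    push_cast; simp; ring
  rw [this, Complex.re_ofReal_mul, Complex.I_mul_re]
  ring

theorem thetaTerm_summable (g N : ℕ) (hN0 : 0 < N) (P : Matrix (Fin g) (Fin g) ℂ)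
    (hpos : (P.map Complex.im).PosDef) (μ : Fin g → ℤ) :
    Summable (fun n => ‖thetaTerm g N P μ 0 n‖) := by
  obtain ⟨c, hc, h⟩ := quad_coercive g _ hpos
  have hN : (0 : ℝ) < N := by exact_mod_cast hN0
  have hs := summable_fin_prod g
    (fun j n => Real.exp (-Real.pi * (n + (μ j : ℝ) / N) ^ 2 * (N * c)))
    (fun _ _ => (Real.exp_pos _).le)
    (fun j => (HurwitzZeta.hasSum_int_evenKernel ((μ j : ℝ) / N) (mul_pos hN hc)).summable)
  refine hs.of_nonneg_of_le (fun _ => norm_nonneg _) fun n => ?_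
  rw [thetaTerm_zero_norm, ← Real.exp_sum, Real.exp_le_exp]
  have h1 := h (fun j => (μ j : ℝ) / N + n j)
  have h2 : ∑ j, -Real.pi * ((n j : ℝ) + (μ j : ℝ) / N) ^ 2 * (N * c)
      = -(Real.pi * N * (c * ∑ j, ((μ j : ℝ) / N + n j) ^ 2)) := by
    simp_rw [Finset.mul_sum, ← Finset.sum_neg_distrib]
    refine Finset.sum_congr rfl fun j _ => ?_
    ring
  rw [h2, neg_mul, neg_mul, neg_le_neg_iff]
  exact mul_le_mul_of_nonneg_left h1 (by positivity)

section Fourier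

open MeasureTheory

noncomputable local instance : MeasureSpace UnitAddCircle := ⟨AddCircle.haarAddCircle⟩

local instance : Measure.IsAddHaarMeasure (volume : Measure UnitAddCircle) :=
  inferInstanceAs (Measure.IsAddHaarMeasure AddCircle.haarAddCircle)

local instance : IsProbabilityMeasure (volume : Measure UnitAddCircle) :=
  inferInstanceAs (IsProbabilityMeasure AddCircle.haarAddCircle)

/-- Uniqueness of absolutely convergent Fourier series on the torus. -/
theorem fourier_unique (g : ℕ) (a : (Fin g → ℤ) → ℂ) (ha : Summable fun n => ‖a n‖)
    (h0 : ∀ x : Fin g → ℝ,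
      ∑' n, a n * Complex.exp (2 * Real.pi * Complex.I * ∑ j, (n j : ℂ) * x j) = 0)
    (m : Fin g → ℤ) : a m = 0 := by
  have hs : Summable (fun n => a n • UnitAddTorus.mFourier (d := Fin g) n) := by
    refine Summable.of_norm ?_
    refine ha.congr fun n => ?_
    rw [norm_smul, UnitAddTorus.mFourier_norm, mul_one]
  have hz : ∑' n, a n • UnitAddTorus.mFourier (d := Fin g) n = 0 := by
    ext y
    rw [← ContinuousMap.tsum_apply hs]
    obtain ⟨x, rfl⟩ : ∃ x : Fin g → ℝ, (fun j => (x j : UnitAddCircle)) = y := by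
      choose x hx using fun j => QuotientAddGroup.mk_surjective (y j)
      exact ⟨x, funext hx⟩
    rw [ContinuousMap.zero_apply, ← h0 x]
    refine tsum_congr fun n => ?_
    rw [ContinuousMap.smul_apply, smul_eq_mul, Finset.mul_sum, Complex.exp_sum]
    congr 1
    change ∏ j, fourier (n j) (x j : UnitAddCircle) = _
    refine Finset.prod_congr rfl fun j _ => ?_
    rw [fourier_coe_apply]
    congr 1
    push_cast
    ring
  have hh := hs.hasSum
  rw [hz] at hh
  have hL := (ContinuousMap.toLp (E := ℂ) 2 (volume : Measure (UnitAddTorus (Fin g))) ℂ).hasSum hh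
  have hI := (innerSL ℂ (UnitAddTorus.mFourierLp (d := Fin g) 2 m)).hasSum hL
  have ho := orthonormal_iff_ite.1 (UnitAddTorus.orthonormal_mFourier (d := Fin g))
  have hf : ∀ n, innerSL ℂ (UnitAddTorus.mFourierLp (d := Fin g) 2 m)
      (ContinuousMap.toLp (E := ℂ) 2 (volume : Measure (UnitAddTorus (Fin g))) ℂ
        (a n • UnitAddTorus.mFourier (d := Fin g) n)) = if n = m then a m else 0 := by
    intro n
    have := ho m n
    rw [map_smul, map_smul, innerSL_apply_apply]
    change a n • inner ℂ (UnitAddTorus.mFourierLp (d := Fin g) 2 m)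
      (UnitAddTorus.mFourierLp (d := Fin g) 2 n) = _
    rw [this]
    by_cases h : n = m
    · subst h; simp
    · simp [h, Ne.symm h]
  have hI' : HasSum (fun n => if n = m then a m else 0) (0 : ℂ) := by
    simp only [hf, map_zero] at hI
    exact hI
  exact (hasSum_ite_eq m (a m)).unique hI'

end Fourier

theorem theta_ne_zero (g N : ℕ) (hN0 : 0 < N) (P : Matrix (Fin g) (Fin g) ℂ)
    (hpos : (P.map Complex.im).PosDef) (μ : Fin g → ℤ) : ∃ z, theta g N P μ z ≠ 0 := by
  by_contra! hcon
  have hN : (N : ℂ) ≠ 0 := by exact_mod_cast hN0.ne'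
  have := fourier_unique g (fun n => thetaTerm g N P μ 0 n) (thetaTerm_summable g N hN0 P hpos μ)
    (fun x => by
      have h := hcon (fun j => (x j : ℂ) / N)
      have key : ∀ n, thetaTerm g N P μ (fun j => (x j : ℂ) / N) n =
          Complex.exp (2 * Real.pi * Complex.I * ∑ j, (μ j : ℂ) / N * x j) *
          (thetaTerm g N P μ 0 n *
            Complex.exp (2 * Real.pi * Complex.I * ∑ j, (n j : ℂ) * x j)) := by
        intro n
        rw [thetaTerm, thetaTerm, ← Complex.exp_add, ← Complex.exp_add]
        congr 1
        have e : ∑ j, ((μ j : ℂ) / N + (n j : ℂ)) * ((x j : ℂ) / N)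
            = (∑ j, (μ j : ℂ) / N * x j + ∑ j, (n j : ℂ) * x j) / N := by
          rw [← Finset.sum_add_distrib, Finset.sum_div]
          refine Finset.sum_congr rfl fun j _ => ?_
          ring
        rw [e]
        simp only [Pi.zero_apply, mul_zero, Finset.sum_const_zero, add_zero]
        field_simp
        ring
      rw [theta, tsum_congr key, tsum_mul_left] at h
      exact (mul_eq_zero.1 h).resolve_left (Complex.exp_ne_zero _)) 0
  exact Complex.exp_ne_zero _ this

/-- The character of `ℤ^g` attached to `μ`. -/
noncomputable def thetaChar (g N : ℕ) (μ : Fin g → ℤ) : Multiplicative (Fin g → ℤ) →* ℂ where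
  toFun a := Complex.exp (2 * Real.pi * Complex.I * ∑ j, (μ j : ℂ) / N * (a.toAdd j : ℂ))
  map_one' := by simp
  map_mul' a b := by
    rw [← Complex.exp_add, ← mul_add, ← Finset.sum_add_distrib]
    simp [mul_add]

theorem theta_translate (g N : ℕ) (hN0 : 0 < N) (P : Matrix (Fin g) (Fin g) ℂ) (μ : Fin g → ℤ)
    (z : Fin g → ℂ) (a : Multiplicative (Fin g → ℤ)) :
    theta g N P μ (fun j => z j + (a.toAdd j : ℂ) / N) = thetaChar g N μ a * theta g N P μ z := by
  have hN : (N : ℂ) ≠ 0 := by exact_mod_cast hN0.ne'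
  rw [theta, theta, ← tsum_mul_left]
  refine tsum_congr fun n => ?_
  change _ = Complex.exp _ * _
  rw [thetaTerm, thetaTerm, ← Complex.exp_add, Complex.exp_eq_exp_iff_exists_int]
  refine ⟨∑ j, n j * a.toAdd j, ?_⟩
  have e : ∑ j, ((μ j : ℂ) / N + (n j : ℂ)) * (z j + (a.toAdd j : ℂ) / N)
      = ∑ j, ((μ j : ℂ) / N + (n j : ℂ)) * z j + (∑ j, (μ j : ℂ) / N * (a.toAdd j : ℂ)
        + ∑ j, (n j : ℂ) * (a.toAdd j : ℂ)) / N := by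
    rw [← Finset.sum_add_distrib, Finset.sum_div, ← Finset.sum_add_distrib]
    refine Finset.sum_congr rfl fun j _ => ?_
    ring
  rw [e]
  push_cast
  field_simp
  ring

theorem thetaChar_injective (g N : ℕ) (hN0 : 0 < N) :
    Function.Injective (fun m : Fin g → Fin N => thetaChar g N (fun j => ((m j : ℕ) : ℤ))) := by
  intro m m' h
  funext j
  have hN : (N : ℂ) ≠ 0 := by exact_mod_cast hN0.ne'
  have h1 := DFunLike.congr_fun h (Multiplicative.ofAdd (Pi.single j (1 : ℤ)))
  change Complex.exp _ = Complex.exp _ at h1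
  have hs : ∀ m : Fin g → Fin N, ∑ i, (((m i : ℕ) : ℤ) : ℂ) / N *
      (((Multiplicative.ofAdd (Pi.single j (1 : ℤ) : Fin g → ℤ)).toAdd i : ℤ) : ℂ)
      = ((m j : ℕ) : ℂ) / N := by
    intro m
    rw [Finset.sum_eq_single j]
    · simp
    · intro i _ hi
      simp [hi]
    · simp
  rw [hs, hs, Complex.exp_eq_exp_iff_exists_int] at h1
  obtain ⟨k, hk⟩ := h1
  have hk' : (2 * Real.pi * Complex.I) * ((m j : ℕ) : ℂ)
      = (2 * Real.pi * Complex.I) * (((m' j : ℕ) : ℂ) + k * N) := by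
    field_simp at hk ⊢
    linear_combination hk
  have hk2 := mul_left_cancel₀ Complex.two_pi_I_ne_zero hk'
  have hk3 : ((m j : ℕ) : ℤ) = (m' j : ℕ) + k * N := by exact_mod_cast hk2
  apply Fin.ext
  have l1 := (m j).2
  have l2 := (m' j).2
  have := congrArg (fun t : ℤ => t % N) hk3
  simp only [Int.add_mul_emod_self_right] at this
  rw [Int.emod_eq_of_lt (by positivity) (by exact_mod_cast l1),
    Int.emod_eq_of_lt (by positivity) (by exact_mod_cast l2)] at this
  exact_mod_cast this

/-- The theta series `θ_μ^Π`, for `μ ∈ {0,…,N−1}^g`, are linearly independent over `ℂ`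
in the space of functions `ℂ^g → ℂ`. -/
theorem theta_linearIndependent (g N : ℕ) (hg : 1 ≤ g) (hN0 : 0 < N) (hN : Even N)
    (P : Matrix (Fin g) (Fin g) ℂ) (hsym : P.IsSymm)
    (hpos : (P.map Complex.im).PosDef) :
    LinearIndependent ℂ
      (fun m : Fin g → Fin N => theta g N P (fun j => ((m j : ℕ) : ℤ))) := by
  rw [Fintype.linearIndependent_iff]
  intro c hc m
  obtain ⟨z, hz⟩ := theta_ne_zero g N hN0 P hpos (fun j => ((m j : ℕ) : ℤ))
  have hli := (linearIndependent_monoidHom (Multiplicative (Fin g → ℤ)) ℂ).comp _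
    (thetaChar_injective g N hN0)
  rw [Fintype.linearIndependent_iff] at hli
  have := hli (fun m => c m * theta g N P (fun j => ((m j : ℕ) : ℤ)) z) (by
    funext a
    have h := congrFun hc (fun j => z j + (a.toAdd j : ℂ) / N)
    simp only [Finset.sum_apply, Pi.smul_apply, smul_eq_mul, Pi.zero_apply,
      Function.comp_apply] at h ⊢
    rw [← h]
    refine Finset.sum_congr rfl fun m _ => ?_
    rw [theta_translate g N hN0]
    ring) m
  exact (mul_eq_zero.1 this).resolve_right hz
end

section
/- Let g ≥ 1 be an integer, N a positive even integer, and Π a symmetric g×g complex matrix whose imaginary part Π_I is positive definite. If f : ℂ^g → ℂ is holomorphic and satisfies, for all z ∈ ℂ^g and all j ∈ {1,…,g}, the periodicity conditions f(z + e_j) = f(z) and f(z + Π e_j) = exp(−2πiN z_j − πiN Π_{jj}) f(z) (where e_j is the j-th standard basis vector and Π e_j the j-th column of Π), then f is a ℂ-linear combination of the theta series {θ_μ^Π : μ ∈ {0,1,…,N−1}^g}; consequently the space of classical theta functions has complex dimension N^g. -/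
open scoped BigOperators

/-- The space of classical theta functions: holomorphic functions `f : ℂ^g → ℂ`
satisfying the periodicity conditions `f(z+e_j) = f(z)` and
`f(z+Πe_j) = exp(−2πiN z_j − πiN Π_{jj}) f(z)`. -/
noncomputable def thetaSpace (g N : ℕ) (P : Matrix (Fin g) (Fin g) ℂ) :
    Submodule ℂ ((Fin g → ℂ) → ℂ) where
  carrier := {f | Differentiable ℂ f ∧
    (∀ (z : Fin g → ℂ) (j : Fin g), f (z + Pi.single j 1) = f z) ∧
    (∀ (z : Fin g → ℂ) (j : Fin g), f (z + fun k => P k j)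
      = Complex.exp (-(2 * Real.pi * Complex.I * N * z j)
          - Real.pi * Complex.I * N * P j j) * f z)}
  zero_mem' := by
    refine ⟨differentiable_const 0, fun z j => rfl, fun z j => by simp⟩
  add_mem' := by
    rintro f h ⟨hf, hf1, hf2⟩ ⟨hh, hh1, hh2⟩
    refine ⟨hf.add hh, fun z j => by simp [hf1 z j, hh1 z j], fun z j => ?_⟩
    simp only [Pi.add_apply, hf2 z j, hh2 z j]
    ring
  smul_mem' := by
    rintro c f ⟨hf, hf1, hf2⟩
    refine ⟨hf.const_smul c, fun z j => by simp [hf1 z j], fun z j => ?_⟩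
    simp only [Pi.smul_apply, hf2 z j, smul_eq_mul]
    ring


namespace ThetaAux
open MeasureTheory

/-- Entire and invariant under the standard lattice. -/
def Good (g : ℕ) (φ : (Fin g → ℂ) → ℂ) : Prop :=
  Differentiable ℂ φ ∧ ∀ (z : Fin g → ℂ) (j : Fin g), φ (z + Pi.single j 1) = φ z

lemma Good.int {g : ℕ} {φ : (Fin g → ℂ) → ℂ} (h : Good g φ) (n : Fin g → ℤ) (z : Fin g → ℂ) :
    φ (z + fun j => (n j : ℂ)) = φ z := by
  let H : AddSubgroup (Fin g → ℤ) :=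
    { carrier := {n | ∀ z, φ (z + fun j => (n j : ℂ)) = φ z}
      zero_mem' := by
        intro z
        congr 1
        ext j
        simp
      add_mem' := by
        intro a b ha hb z
        refine Eq.trans ?_ ((hb (z + fun j => (a j : ℂ))).trans (ha z))
        congr 1
        ext j
        simp [add_assoc]
      neg_mem' := by
        intro a ha z
        rw [← ha]
        congr 1
        ext j
        simp }
  have hs : ∀ j, (Pi.single j 1 : Fin g → ℤ) ∈ H := by
    intro j z
    rw [← h.2 z j]
    congr 2
    ext k
    by_cases hk : k = j
    · subst hk; simp
    · simp [hk]
  have : n ∈ H := by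
    rw [pi_eq_sum_univ' n]
    exact sum_mem fun j _ => zsmul_mem (hs j) (n j)
  exact this z

lemma Good.shift {g : ℕ} {φ : (Fin g → ℂ) → ℂ} (h : Good g φ) (w : Fin g → ℂ) :
    Good g (fun z => φ (z + w)) := by
  refine ⟨h.1.comp (by fun_prop), fun z j => ?_⟩
  simp only [add_right_comm z _ w, h.2]

/-- The torus. -/
abbrev T (g : ℕ) := Fin g → UnitAddCircle

/-- Haar measure on the torus. -/
noncomputable def nu (g : ℕ) : Measure (T g) := Measure.pi fun _ => AddCircle.haarAddCircle

instance (g : ℕ) : IsProbabilityMeasure (nu g) := by unfold nu; infer_instance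
instance (g : ℕ) : Measure.IsAddLeftInvariant (nu g) := by unfold nu; infer_instance
instance (g : ℕ) : Measure.IsAddRightInvariant (nu g) := by unfold nu; infer_instance

/-- Real representatives. -/
noncomputable def rep {g : ℕ} (t : T g) : Fin g → ℂ := fun j => ((Quotient.out (t j) : ℝ) : ℂ)

/-- Projection to the torus -/
def pr {g : ℕ} (x : Fin g → ℝ) : T g := fun j => (x j : UnitAddCircle)

/-- lift -/
noncomputable def lft {g : ℕ} (φ : (Fin g → ℂ) → ℂ) (t : T g) : ℂ := φ (rep t)

lemma lft_pr {g : ℕ} {φ : (Fin g → ℂ) → ℂ} (h : Good g φ) (x : Fin g → ℝ) :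
    lft φ (pr x) = φ (fun j => (x j : ℂ)) := by
  have : ∀ j, ∃ n : ℤ, (Quotient.out (pr x j) : ℝ) = x j + n := by
    intro j
    have h1 : ((Quotient.out (pr x j) : ℝ) : UnitAddCircle) = (x j : UnitAddCircle) :=
      Quotient.out_eq _
    rw [← sub_eq_zero, ← AddCircle.coe_sub, AddCircle.coe_eq_zero_iff] at h1
    obtain ⟨n, hn⟩ := h1
    refine ⟨n, ?_⟩
    simp only [zsmul_eq_mul, mul_one] at hn
    rw [hn]
    ring
  choose n hn using this
  rw [← h.int n]
  unfold lft rep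
  congr 1
  ext j
  simp [hn]

lemma pr_surj {g : ℕ} (t : T g) : ∃ x : Fin g → ℝ, pr x = t :=
  ⟨fun j => Quotient.out (t j), funext fun _ => Quotient.out_eq _⟩

lemma pr_add {g : ℕ} (x y : Fin g → ℝ) : pr (x + y) = pr x + pr y := by
  ext j; simp [pr]

lemma pr_quot (g : ℕ) : IsOpenQuotientMap (pr (g := g)) := by
  have := IsOpenQuotientMap.piMap (f := fun (_ : Fin g) (x : ℝ) => (x : UnitAddCircle))
    (fun _ => QuotientAddGroup.isOpenQuotientMap_mk)
  exact this

lemma lft_cont {g : ℕ} {φ : (Fin g → ℂ) → ℂ} (h : Good g φ) : Continuous (lft φ) := by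
  rw [(pr_quot g).isQuotientMap.continuous_iff]
  have : lft φ ∘ pr = fun x : Fin g → ℝ => φ (fun j => (x j : ℂ)) := funext fun x => lft_pr h x
  rw [this]
  exact h.1.continuous.comp (by fun_prop)

/-- average over the torus -/
noncomputable def Av {g : ℕ} (φ : (Fin g → ℂ) → ℂ) : ℂ := ∫ t, lft φ t ∂(nu g)

lemma lft_int {g : ℕ} {φ : (Fin g → ℂ) → ℂ} (h : Good g φ) : Integrable (lft φ) (nu g) :=
  (lft_cont h).integrable_of_hasCompactSupport (HasCompactSupport.of_compactSpace _)

lemma lft_shift {g : ℕ} {φ : (Fin g → ℂ) → ℂ} (h : Good g φ) (r : Fin g → ℝ) (t : T g) :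
    lft (fun z => φ (z + fun j => (r j : ℂ))) t = lft φ (t + pr r) := by
  obtain ⟨x, rfl⟩ := pr_surj t
  rw [← pr_add, lft_pr h, lft_pr (h.shift _)]
  congr 1
  ext j
  simp

lemma Av_real {g : ℕ} {φ : (Fin g → ℂ) → ℂ} (h : Good g φ) (r : Fin g → ℝ) :
    Av (fun z => φ (z + fun j => (r j : ℂ))) = Av φ := by
  unfold Av
  simp_rw [lft_shift h]
  exact integral_add_right_eq_self (lft φ) (pr r)

lemma one_dim {h : ℂ → ℂ} (hd : Differentiable ℂ h) (hp : ∀ s, h (s + 1) = h s) (y : ℝ) :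
    ∫ x in (0:ℝ)..1, h (x + y * Complex.I) = ∫ x in (0:ℝ)..1, h x := by
  have := Complex.integral_boundary_rect_eq_zero_of_differentiableOn h 0 (1 + y * Complex.I)
    hd.differentiableOn
  have e : ∀ t : ℝ, h (1 + t * Complex.I) = h (t * Complex.I) := fun t => by rw [add_comm, hp]
  simp [e] at this
  rw [sub_eq_zero] at this
  exact this.symm

lemma avg {g : ℕ} {φ : (Fin g → ℂ) → ℂ} (h : Good g φ) (j : Fin g) :
    Av φ = ∫ t, (∫ x in (0:ℝ)..1, φ (rep t + Pi.single j (x:ℂ))) ∂(nu g) := by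
  have e : ∀ (x : ℝ) (t : T g), φ (rep t + Pi.single j (x:ℂ)) = lft φ (t + pr (Pi.single j x)) := by
    intro x t
    rw [← lft_shift h]
    unfold lft
    simp only
    congr 2
    ext k
    by_cases hk : k = j
    · subst hk; simp
    · simp [hk]
  simp_rw [e, intervalIntegral.integral_of_le zero_le_one]
  rw [integral_integral_swap]
  · have : ∀ x : ℝ, ∫ t, lft φ (t + pr (Pi.single j x)) ∂(nu g) = Av φ := fun x =>
      integral_add_right_eq_self (lft φ) _
    simp [this]
  · obtain ⟨C, hC⟩ := isCompact_univ.exists_bound_of_continuousOn (lft_cont h).continuousOn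
    refine Integrable.of_bound (C := C) ?_ (Filter.Eventually.of_forall fun p => hC _ trivial)
    apply Continuous.aestronglyMeasurable
    have h1 : Continuous (fun x : ℝ => pr (Pi.single j x : Fin g → ℝ)) :=
      (pr_quot g).continuous.comp (continuous_single (A := fun _ : Fin g => ℝ) j)
    exact (lft_cont h).comp (continuous_fst.add (h1.comp continuous_snd))

lemma Av_imag {g : ℕ} {φ : (Fin g → ℂ) → ℂ} (h : Good g φ) (j : Fin g) (y : ℝ) :
    Av (fun z => φ (z + Pi.single j (y * Complex.I))) = Av φ := by
  rw [avg h j, avg (h.shift _) j]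
  congr 1
  ext t
  have := one_dim (h := fun s => φ (rep t + Pi.single j s)) ?_ ?_ y
  · rw [← this]
    congr 1
    ext x
    rw [Pi.single_add, add_assoc]
  · refine h.1.comp ?_
    have : Differentiable ℂ (fun s : ℂ => (Pi.single j s : Fin g → ℂ)) :=
      (ContinuousLinearMap.single ℂ (fun _ : Fin g => ℂ) j).differentiable
    fun_prop
  · intro s
    rw [Pi.single_add, ← add_assoc, h.2]

lemma Av_shift {g : ℕ} {φ : (Fin g → ℂ) → ℂ} (h : Good g φ) (w : Fin g → ℂ) :
    Av (fun z => φ (z + w)) = Av φ := by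
  let H : AddSubmonoid (Fin g → ℂ) :=
    { carrier := {w | ∀ φ, Good g φ → Av (fun z => φ (z + w)) = Av φ}
      zero_mem' := by intro φ h; simp
      add_mem' := by
        intro a b ha hb φ h
        rw [← hb φ h, ← ha _ (h.shift b)]
        simp only [add_assoc] }
  have : w ∈ H := by
    have e : w = (fun j => ((w j).re : ℂ)) + ∑ j, Pi.single j ((w j).im * Complex.I) := by
      ext k
      simp [Finset.sum_apply, Pi.single_apply]
    rw [e]
    exact H.add_mem (fun φ h => Av_real h _) (sum_mem fun j _ φ h => Av_imag h j _)
  exact this φ h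


/-- characters -/
noncomputable def ch {g : ℕ} (a : Fin g → ℤ) (z : Fin g → ℂ) : ℂ :=
  Complex.exp (2 * Real.pi * Complex.I * ∑ j, (a j : ℂ) * z j)

lemma ch_add {g : ℕ} (a : Fin g → ℤ) (z w : Fin g → ℂ) : ch a (z + w) = ch a z * ch a w := by
  unfold ch
  rw [← Complex.exp_add]
  simp [mul_add, Finset.sum_add_distrib]

lemma ch_add' {g : ℕ} (a b : Fin g → ℤ) (z : Fin g → ℂ) : ch (a + b) z = ch a z * ch b z := by
  unfold ch
  rw [← Complex.exp_add]
  simp [mul_add, add_mul, Finset.sum_add_distrib]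

lemma ch_zero {g : ℕ} (z : Fin g → ℂ) : ch 0 z = 1 := by
  simp [ch]

lemma ch_neg {g : ℕ} (a : Fin g → ℤ) (z : Fin g → ℂ) : ch a z * ch (-a) z = 1 := by
  rw [← ch_add', add_neg_cancel, ch_zero]

lemma ch_single {g : ℕ} (a : Fin g → ℤ) (j : Fin g) (c : ℂ) :
    ch a (Pi.single j c) = Complex.exp (2 * Real.pi * Complex.I * (a j * c)) := by
  unfold ch
  congr 2
  rw [Finset.sum_eq_single j]
  · simp
  · intro k _ hk
    simp [hk]
  · simp

lemma ch_good {g : ℕ} (a : Fin g → ℤ) : Good g (ch a) := by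
  refine ⟨by unfold ch; fun_prop, fun z j => ?_⟩
  rw [ch_add, ch_single, mul_one, mul_comm _ (a j : ℂ), Complex.exp_int_mul_two_pi_mul_I, mul_one]

lemma Good.mul {g : ℕ} {φ ψ : (Fin g → ℂ) → ℂ} (h : Good g φ) (h' : Good g ψ) :
    Good g (fun z => φ z * ψ z) :=
  ⟨h.1.mul h'.1, fun z j => by simp only [h.2, h'.2]⟩

lemma Good.add {g : ℕ} {φ ψ : (Fin g → ℂ) → ℂ} (h : Good g φ) (h' : Good g ψ) :
    Good g (fun z => φ z + ψ z) :=
  ⟨h.1.add h'.1, fun z j => by simp only [h.2, h'.2]⟩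

lemma Av_const_mul {g : ℕ} (c : ℂ) (φ : (Fin g → ℂ) → ℂ) : Av (fun z => c * φ z) = c * Av φ :=
  integral_const_mul c _

lemma Av_add {g : ℕ} {φ ψ : (Fin g → ℂ) → ℂ} (h : Good g φ) (h' : Good g ψ) :
    Av (fun z => φ z + ψ z) = Av φ + Av ψ :=
  integral_add (lft_int h) (lft_int h')

lemma Av_ch_zero {g : ℕ} : Av (ch (0 : Fin g → ℤ)) = 1 := by
  simp [Av, lft, ch_zero]

lemma Av_ch {g : ℕ} {b : Fin g → ℤ} (hb : b ≠ 0) : Av (ch b) = 0 := by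
  obtain ⟨j, hj⟩ := Function.ne_iff.mp hb
  have h1 := Av_shift (ch_good b) (Pi.single j (1 / (2 * (b j : ℂ))))
  have hj' : (b j : ℂ) ≠ 0 := by exact_mod_cast hj
  have h2 : ch b (Pi.single j (1 / (2 * (b j : ℂ)))) = -1 := by
    rw [ch_single, ← Complex.exp_pi_mul_I]
    congr 1
    field_simp
  simp_rw [ch_add, h2, mul_comm _ (-1 : ℂ), Av_const_mul] at h1
  linear_combination (-1/2 : ℂ) * h1

/-- Fourier coefficients -/
noncomputable def coef {g : ℕ} (f : (Fin g → ℂ) → ℂ) (a : Fin g → ℤ) : ℂ :=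
  Av (fun z => f z * ch (-a) z)

lemma coef_shift {g : ℕ} {f : (Fin g → ℂ) → ℂ} (h : Good g f) (a : Fin g → ℤ) (w : Fin g → ℂ) :
    coef (fun z => f (z + w)) a = ch a w * coef f a := by
  unfold coef
  rw [← Av_shift (h.mul (ch_good (-a))) w, ← Av_const_mul]
  congr 1
  ext z
  rw [ch_add]
  linear_combination (- f (z + w) * ch (-a) z) * ch_neg a w

lemma mFourier_pr {g : ℕ} (a : Fin g → ℤ) (x : Fin g → ℝ) :
    UnitAddTorus.mFourier a (pr x) = ch a (fun j => (x j : ℂ)) := by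
  simp only [UnitAddTorus.mFourier, ContinuousMap.coe_mk, pr, fourier_coe_apply, ch]
  rw [← Complex.exp_sum, Finset.mul_sum]
  congr 1
  refine Finset.sum_congr rfl fun j _ => ?_
  simp
  ring

lemma mFourierCoeff_lft {g : ℕ} {f : (Fin g → ℂ) → ℂ} (h : Good g f) (a : Fin g → ℤ) :
    UnitAddTorus.mFourierCoeff (lft f) a = coef f a := by
  change ∫ t, UnitAddTorus.mFourier (-a) t • lft f t ∂(nu g) = _
  unfold coef Av
  congr 1
  ext t
  obtain ⟨x, rfl⟩ := pr_surj t
  rw [lft_pr (h.mul (ch_good _)), lft_pr h, mFourier_pr, smul_eq_mul, mul_comm]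

lemma eq_zero_of_coef {g : ℕ} {f : (Fin g → ℂ) → ℂ} (h : Good g f) (h0 : ∀ a, coef f a = 0) :
    f = 0 := by
  ext w
  have hw := h.shift w
  have h1 : ∀ a, UnitAddTorus.mFourierCoeff (lft fun z => f (z + w)) a = 0 := fun a => by
    rw [mFourierCoeff_lft hw, coef_shift h, h0, mul_zero]
  let F : C(UnitAddTorus (Fin g), ℂ) := ⟨lft fun z => f (z + w), lft_cont hw⟩
  have h2 : UnitAddTorus.mFourierCoeff F = 0 := funext h1
  have h3 := UnitAddTorus.hasSum_mFourier_series_apply_of_summable (f := F)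
    (by rw [h2]; exact summable_zero) (pr 0)
  simp only [h2, Pi.zero_apply, zero_smul] at h3
  have h4 : F (pr 0) = f w := by
    have h5 : F (pr 0) = lft (fun z => f (z + w)) (pr 0) := rfl
    rw [h5, lft_pr hw]
    congr 1
    ext j
    simp
  rw [← h4]
  exact h3.unique hasSum_zero

end ThetaAux

namespace ThetaAux
open MeasureTheory

/-- l1 norm -/
def S {g : ℕ} (a : Fin g → ℤ) : ℝ := ∑ j, |(a j : ℝ)|

lemma S_nonneg {g : ℕ} (a : Fin g → ℤ) : 0 ≤ S a := Finset.sum_nonneg fun _ _ => abs_nonneg _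

lemma summable_one : Summable fun n : ℤ => Real.exp (-|(n : ℝ)|) := by
  have h := Real.summable_exp_neg_nat
  apply Summable.of_nat_of_neg <;> simpa using h

lemma summable_S (g : ℕ) : Summable fun a : Fin g → ℤ => Real.exp (-S a) := by
  induction g with
  | zero => exact (hasSum_fintype _).summable
  | succ g ih =>
    rw [← (Fin.consEquiv fun _ : Fin (g + 1) => ℤ).summable_iff]
    have := summable_one.mul_of_nonneg ih (fun _ => (Real.exp_pos _).le)
      (fun _ => (Real.exp_pos _).le)
    refine this.congr fun p => ?_
    simp only [Function.comp_apply, S, Fin.consEquiv, Equiv.coe_fn_mk, Fin.sum_univ_succ,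
      Fin.cons_zero, Fin.cons_succ]
    rw [← Real.exp_add]
    congr 1
    ring

/-- quadratic form -/
def Q {g : ℕ} (Y : Matrix (Fin g) (Fin g) ℝ) (x : Fin g → ℝ) : ℝ := ∑ j, ∑ k, x j * Y j k * x k

lemma Q_bound {g : ℕ} {Y : Matrix (Fin g) (Fin g) ℝ} (hY : Y.PosDef) :
    ∃ κ : ℝ, 0 < κ ∧ ∀ x : Fin g → ℝ, κ * (∑ j, |x j|) ^ 2 ≤ Q Y x := by
  have hQpos : ∀ x : Fin g → ℝ, x ≠ 0 → 0 < Q Y x := by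
    intro x hx
    have := hY.dotProduct_mulVec_pos hx
    simpa [Q, dotProduct, Matrix.mulVec, Finset.mul_sum, mul_assoc] using this
  have hQc : Continuous (Q Y) := by unfold Q; fun_prop
  have hQs : ∀ (c : ℝ) x, Q Y (c • x) = c ^ 2 * Q Y x := by
    intro c x
    simp only [Q, Pi.smul_apply, smul_eq_mul, Finset.mul_sum]
    refine Finset.sum_congr rfl fun j _ => Finset.sum_congr rfl fun k _ => by ring
  obtain ⟨κ, hκ, hb⟩ : ∃ κ : ℝ, 0 < κ ∧ ∀ x : Fin g → ℝ, ‖x‖ = 1 → κ ≤ Q Y x := by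
    by_cases hne : (Metric.sphere (0 : Fin g → ℝ) 1).Nonempty
    · obtain ⟨x0, hx0, hmin⟩ := (isCompact_sphere (0 : Fin g → ℝ) 1).exists_isMinOn hne
        hQc.continuousOn
      refine ⟨Q Y x0, hQpos _ ?_, fun x hx => hmin (by simpa using hx)⟩
      rintro rfl
      simp at hx0
    · refine ⟨1, one_pos, fun x hx => (hne ⟨x, by simpa using hx⟩).elim⟩
  refine ⟨κ / (g + 1) ^ 2, by positivity, fun x => ?_⟩
  have hS : ∑ j, |x j| ≤ (g + 1) * ‖x‖ := by
    calc ∑ j, |x j| ≤ ∑ _j : Fin g, ‖x‖ := Finset.sum_le_sum fun j _ => norm_le_pi_norm x j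
      _ = g * ‖x‖ := by simp
      _ ≤ _ := by nlinarith [norm_nonneg x]
  have hS0 : 0 ≤ ∑ j, |x j| := Finset.sum_nonneg fun _ _ => abs_nonneg _
  have h1 : κ * ‖x‖ ^ 2 ≤ Q Y x := by
    by_cases hx : x = 0
    · subst hx
      simp [Q]
    · have hn : ‖x‖ ≠ 0 := norm_ne_zero_iff.mpr hx
      have h2 := hb (‖x‖⁻¹ • x) (by rw [norm_smul, norm_inv, norm_norm, inv_mul_cancel₀ hn])
      rw [hQs] at h2
      have h3 : Q Y x = ‖x‖ ^ 2 * ((‖x‖⁻¹) ^ 2 * Q Y x) := by field_simp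
      rw [h3, mul_comm]
      gcongr
  calc κ / (g + 1) ^ 2 * (∑ j, |x j|) ^ 2 ≤ κ / (g + 1) ^ 2 * ((g + 1) * ‖x‖) ^ 2 := by gcongr
    _ = κ * ‖x‖ ^ 2 := by field_simp
    _ ≤ _ := h1

/-- gaussian coefficient -/
noncomputable def q {g : ℕ} (N : ℕ) (P : Matrix (Fin g) (Fin g) ℂ) (a : Fin g → ℤ) : ℂ :=
  Complex.exp (Real.pi * Complex.I / N * ∑ j, ∑ k, (a j : ℂ) * P j k * (a k : ℂ))

lemma q_norm {g : ℕ} (N : ℕ) (P : Matrix (Fin g) (Fin g) ℂ) (a : Fin g → ℤ) :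
    ‖q N P a‖ = Real.exp (-(Real.pi / N * Q (P.map Complex.im) (fun j => (a j : ℝ)))) := by
  rw [q, Complex.norm_exp]
  congr 1
  have h1 : (Real.pi * Complex.I / N : ℂ) = ((Real.pi / N : ℝ) : ℂ) * Complex.I := by
    push_cast; ring
  have h2 : (∑ j, ∑ k, (a j : ℂ) * P j k * (a k : ℂ)).im
      = Q (P.map Complex.im) (fun j => (a j : ℝ)) := by
    simp [Q, Complex.im_sum, Complex.mul_im, Complex.mul_re]
  rw [h1, mul_assoc, Complex.re_ofReal_mul, Complex.I_mul_re, h2]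
  ring

lemma q_summable {g N : ℕ} (hN0 : 0 < N) {P : Matrix (Fin g) (Fin g) ℂ}
    (hpos : (P.map Complex.im).PosDef) (B : ℝ) :
    Summable fun a : Fin g → ℤ => ‖q N P a‖ * Real.exp (B * S a) := by
  obtain ⟨κ, hκ, hb⟩ := Q_bound hpos
  set α := Real.pi / N * κ with hα
  have hN' : (0 : ℝ) < N := by exact_mod_cast hN0
  have hα0 : 0 < α := by positivity
  refine Summable.of_nonneg_of_le (fun a => by positivity) (fun a => ?_)
    ((summable_S g).mul_left (Real.exp ((B + 1) ^ 2 / (4 * α))))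
  rw [q_norm, ← Real.exp_add, ← Real.exp_add, Real.exp_le_exp]
  have h1 : α * S a ^ 2 ≤ Real.pi / N * Q (P.map Complex.im) (fun j => (a j : ℝ)) := by
    rw [hα, mul_assoc]
    have := hb (fun j => (a j : ℝ))
    unfold S
    gcongr
  have h2 : (B + 1) * S a ≤ (B + 1) ^ 2 / (4 * α) + α * S a ^ 2 := by
    have : (B + 1) ^ 2 / (4 * α) + α * S a ^ 2 - (B + 1) * S a
        = (2 * α * S a - (B + 1)) ^ 2 / (4 * α) := by field_simp; ring
    have h3 : 0 ≤ (2 * α * S a - (B + 1)) ^ 2 / (4 * α) := by positivity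
    linarith
  linarith

/-- index -/
def ix {g : ℕ} (N : ℕ) (m n : Fin g → ℤ) : Fin g → ℤ := fun j => m j + N * n j

lemma ix_inj {g N : ℕ} (hN0 : 0 < N) (m : Fin g → ℤ) : Function.Injective (ix N m) := by
  intro n n' h
  ext j
  have := congrFun h j
  simp only [ix, add_right_inj] at this
  exact mul_left_cancel₀ (by exact_mod_cast hN0.ne') this

lemma term_eq {g N : ℕ} (hN0 : 0 < N) (P : Matrix (Fin g) (Fin g) ℂ) (m n : Fin g → ℤ)
    (z : Fin g → ℂ) : thetaTerm g N P m z n = q N P (ix N m n) * ch (ix N m n) z := by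
  have hN' : (N : ℂ) ≠ 0 := by exact_mod_cast hN0.ne'
  unfold thetaTerm q ch
  rw [← Complex.exp_add]
  congr 1
  rw [mul_add]
  congr 1
  · simp only [Finset.mul_sum]
    refine Finset.sum_congr rfl fun j _ => Finset.sum_congr rfl fun k _ => ?_
    simp only [ix]
    push_cast
    field_simp
  · simp only [Finset.mul_sum]
    refine Finset.sum_congr rfl fun j _ => ?_
    simp only [ix]
    push_cast
    field_simp

lemma ch_norm {g : ℕ} (a : Fin g → ℤ) (z : Fin g → ℂ) :
    ‖ch a z‖ ≤ Real.exp (2 * Real.pi * ‖z‖ * S a) := by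
  rw [ch, Complex.norm_exp]
  refine Real.exp_le_exp.mpr ((Complex.re_le_norm _).trans ?_)
  rw [norm_mul]
  have h1 : ‖(2 * Real.pi * Complex.I : ℂ)‖ = 2 * Real.pi := by
    simp [abs_of_pos Real.pi_pos]
  have h2 : ‖∑ j, (a j : ℂ) * z j‖ ≤ ‖z‖ * S a := by
    refine (norm_sum_le _ _).trans ?_
    rw [S, Finset.mul_sum]
    refine Finset.sum_le_sum fun j _ => ?_
    rw [norm_mul, mul_comm, Complex.norm_intCast]
    gcongr
    exact norm_le_pi_norm z j
  rw [h1, mul_assoc (2 * Real.pi) ‖z‖]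
  gcongr

/-- linear form -/
noncomputable def lin {g : ℕ} (a : Fin g → ℤ) : (Fin g → ℂ) →L[ℂ] ℂ :=
  ∑ j, (a j : ℂ) • ContinuousLinearMap.proj j

lemma lin_norm {g : ℕ} (a : Fin g → ℤ) : ‖lin a‖ ≤ S a := by
  refine ContinuousLinearMap.opNorm_le_bound _ (S_nonneg a) fun z => ?_
  simp only [lin, sum_apply, smul_apply,
    ContinuousLinearMap.proj_apply, smul_eq_mul]
  refine (norm_sum_le _ _).trans ?_
  rw [S, Finset.sum_mul]
  refine Finset.sum_le_sum fun j _ => ?_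
  rw [norm_mul, Complex.norm_intCast]
  gcongr
  exact norm_le_pi_norm z j

lemma ch_deriv {g : ℕ} (a : Fin g → ℤ) (z : Fin g → ℂ) :
    HasFDerivAt (ch a) ((ch a z * (2 * Real.pi * Complex.I)) • lin a) z := by
  have h1 : HasFDerivAt (fun z => 2 * Real.pi * Complex.I * lin a z)
      ((2 * Real.pi * Complex.I : ℂ) • lin a) z := (lin a).hasFDerivAt.const_mul _
  have h2 := h1.cexp
  rw [smul_smul] at h2
  have h3 : ch a = fun z => Complex.exp (2 * Real.pi * Complex.I * lin a z) := by
    ext z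
    simp [ch, lin]
  rw [h3]
  exact h2

lemma term_summable {g N : ℕ} (hN0 : 0 < N) {P : Matrix (Fin g) (Fin g) ℂ}
    (hpos : (P.map Complex.im).PosDef) (m : Fin g → ℤ) (z : Fin g → ℂ) :
    Summable fun n => q N P (ix N m n) * ch (ix N m n) z := by
  have := (q_summable hN0 hpos (2 * Real.pi * ‖z‖)).comp_injective (ix_inj hN0 m)
  refine Summable.of_norm_bounded this fun n => ?_
  rw [norm_mul]
  simp only [Function.comp_apply]
  gcongr
  exact ch_norm _ _

lemma theta_eq {g N : ℕ} (hN0 : 0 < N) (P : Matrix (Fin g) (Fin g) ℂ) (m : Fin g → ℤ) :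
    theta g N P m = fun z => ∑' n, q N P (ix N m n) * ch (ix N m n) z := by
  ext z
  simp only [theta, term_eq hN0]

lemma theta_diff {g N : ℕ} (hN0 : 0 < N) {P : Matrix (Fin g) (Fin g) ℂ}
    (hpos : (P.map Complex.im).PosDef) (m : Fin g → ℤ) : Differentiable ℂ (theta g N P m) := by
  rw [theta_eq hN0]
  intro z
  set R := ‖z‖ + 1 with hR
  have hz : z ∈ Metric.ball (0 : Fin g → ℂ) R := by simp [hR]
  have hs := ((q_summable hN0 hpos (2 * Real.pi * R + 1)).comp_injective
    (ix_inj hN0 m)).mul_left (2 * Real.pi)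
  refine (hasFDerivAt_tsum_of_isPreconnected (𝕜 := ℂ) hs Metric.isOpen_ball
    (convex_ball (0 : Fin g → ℂ) R).isPreconnected
    (fun n x _ => (ch_deriv (ix N m n) x).const_mul (q N P (ix N m n))) ?_ hz
    (term_summable hN0 hpos m z) hz).differentiableAt
  intro n x hx
  have hx' : ‖x‖ ≤ R := by simpa using (Metric.mem_ball.mp hx).le
  set a := ix N m n with ha
  have h1 : ‖(2 * Real.pi * Complex.I : ℂ)‖ = 2 * Real.pi := by
    simp [abs_of_pos Real.pi_pos]
  rw [norm_smul, norm_smul, norm_mul, h1]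
  simp only [Function.comp_apply, ← ha]
  have h2 : ‖ch a x‖ ≤ Real.exp (2 * Real.pi * R * S a) :=
    (ch_norm a x).trans (Real.exp_le_exp.mpr (by have := S_nonneg a; gcongr))
  have h3 : ‖lin a‖ ≤ Real.exp (S a) :=
    (lin_norm a).trans (by linarith [Real.add_one_le_exp (S a)])
  calc ‖q N P a‖ * (‖ch a x‖ * (2 * Real.pi) * ‖lin a‖)
      ≤ ‖q N P a‖ * (Real.exp (2 * Real.pi * R * S a) * (2 * Real.pi) * Real.exp (S a)) := by
        gcongr
    _ = 2 * Real.pi * (‖q N P a‖ * Real.exp ((2 * Real.pi * R + 1) * S a)) := by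
        rw [add_mul, one_mul, Real.exp_add]; ring

end ThetaAux

namespace ThetaAux
open MeasureTheory

/-- column -/
def col {g : ℕ} (P : Matrix (Fin g) (Fin g) ℂ) (j : Fin g) : Fin g → ℂ := fun k => P k j

/-- shift -/
def sh {g : ℕ} (N : ℕ) (j : Fin g) : Fin g → ℤ := Pi.single j (N : ℤ)

lemma sh_cast {g : ℕ} (N : ℕ) (j k : Fin g) :
    ((sh N j k : ℤ) : ℂ) = if k = j then (N : ℂ) else 0 := by
  unfold sh
  by_cases h : k = j
  · subst h; simp
  · simp [h]

lemma ch_sh {g : ℕ} (N : ℕ) (j : Fin g) (z : Fin g → ℂ) :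
    ch (sh N j) z = Complex.exp (2 * Real.pi * Complex.I * N * z j) := by
  unfold ch
  simp only [sh_cast, ite_mul, zero_mul, Finset.sum_ite_eq', Finset.mem_univ, if_true]
  congr 1
  ring

lemma q_sh {g N : ℕ} (hN0 : 0 < N) {P : Matrix (Fin g) (Fin g) ℂ} (hsym : P.IsSymm)
    (a : Fin g → ℤ) (j : Fin g) :
    q N P (a + sh N j) = q N P a * ch a (col P j)
      * Complex.exp (Real.pi * Complex.I * N * P j j) := by
  have hN' : (N : ℂ) ≠ 0 := by exact_mod_cast hN0.ne'
  unfold q ch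
  rw [← Complex.exp_add, ← Complex.exp_add]
  congr 1
  have h1 : ∑ i, ∑ k, (((a + sh N j) i : ℤ) : ℂ) * P i k * (((a + sh N j) k : ℤ) : ℂ)
      = (∑ i, ∑ k, (a i : ℂ) * P i k * (a k : ℂ)) + 2 * N * (∑ k, (a k : ℂ) * col P j k)
        + N * N * P j j := by
    have hP : ∀ k, P j k = P k j := fun k => hsym.apply k j
    simp only [Pi.add_apply, Int.cast_add, sh_cast, mul_add, add_mul, Finset.sum_add_distrib,
      ite_mul, mul_ite, zero_mul, mul_zero, Finset.sum_ite_eq', Finset.mem_univ, if_true,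
      Finset.sum_ite_irrel, Finset.sum_const_zero, col]
    simp only [hP, Finset.mul_sum]
    have e : ∀ x, (2 : ℂ) * N * (a x * P x j) = N * P x j * a x + a x * P x j * N := by
      intro x; ring
    simp only [e, Finset.sum_add_distrib]
    ring
  rw [h1]
  field_simp

lemma ix_sh {g : ℕ} (N : ℕ) (m n : Fin g → ℤ) (j : Fin g) :
    ix N m (n + Pi.single j 1) = ix N m n + sh N j := by
  ext k
  by_cases h : k = j
  · subst h; simp [ix, sh]; ring
  · simp [ix, sh, h]

lemma theta_mem {g N : ℕ} (hN0 : 0 < N) {P : Matrix (Fin g) (Fin g) ℂ} (hsym : P.IsSymm)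
    (hpos : (P.map Complex.im).PosDef) (m : Fin g → ℤ) : theta g N P m ∈ thetaSpace g N P := by
  refine ⟨theta_diff hN0 hpos m, fun z j => ?_, fun z j => ?_⟩
  · simp only [theta_eq hN0, (ch_good _).2]
  · simp only [theta_eq hN0]
    rw [← tsum_mul_left, ← (Equiv.addRight (Pi.single j (1 : ℤ) : Fin g → ℤ)).tsum_eq
      (fun n => Complex.exp (-(2 * Real.pi * Complex.I * N * z j)
          - Real.pi * Complex.I * N * P j j) * (q N P (ix N m n) * ch (ix N m n) z))]
    refine tsum_congr fun n => ?_
    simp only [Equiv.coe_addRight]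
    rw [ix_sh, q_sh hN0 hsym, ch_add', ch_sh, ch_add]
    change _ * (_ * ch _ (col P j)) = _
    rw [sub_eq_add_neg, Complex.exp_add, Complex.exp_neg, Complex.exp_neg]
    field_simp

lemma mem_good {g N : ℕ} {P : Matrix (Fin g) (Fin g) ℂ} {f : (Fin g → ℂ) → ℂ}
    (hf : f ∈ thetaSpace g N P) : Good g f := ⟨hf.1, hf.2.1⟩

lemma coef_rec {g N : ℕ} {P : Matrix (Fin g) (Fin g) ℂ} {f : (Fin g → ℂ) → ℂ}
    (hf : f ∈ thetaSpace g N P) (a : Fin g → ℤ) (j : Fin g) :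
    ch a (col P j) * coef f a
      = Complex.exp (-(Real.pi * Complex.I * N * P j j)) * coef f (a + sh N j) := by
  rw [← coef_shift (mem_good hf)]
  unfold coef
  rw [← Av_const_mul]
  congr 1
  ext z
  have h1 : f (z + col P j) = Complex.exp (-(2 * Real.pi * Complex.I * N * z j)
      - Real.pi * Complex.I * N * P j j) * f z := hf.2.2 z j
  have h2 := ch_neg (sh N j) z
  rw [ch_sh] at h2
  change f (z + col P j) * ch (-a) z = _
  rw [h1, neg_add, ch_add', sub_eq_add_neg, Complex.exp_add, Complex.exp_neg]
  have h3 : ch (-sh N j) z = (Complex.exp (2 * Real.pi * Complex.I * N * z j))⁻¹ :=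
    eq_inv_of_mul_eq_one_right h2
  rw [h3]
  ring

lemma ch_ne {g : ℕ} (a : Fin g → ℤ) (z : Fin g → ℂ) : ch a z ≠ 0 := Complex.exp_ne_zero _

lemma coef_zero_iff {g N : ℕ} {P : Matrix (Fin g) (Fin g) ℂ} {f : (Fin g → ℂ) → ℂ}
    (hf : f ∈ thetaSpace g N P) (n a : Fin g → ℤ) :
    coef f (ix N a n) = 0 ↔ coef f a = 0 := by
  let H : AddSubgroup (Fin g → ℤ) :=
    { carrier := {n | ∀ a, coef f (ix N a n) = 0 ↔ coef f a = 0}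
      zero_mem' := by
        intro a
        have : ix N a 0 = a := by ext j; simp [ix]
        rw [this]
      add_mem' := by
        intro n n' h h' a
        have : ix N a (n + n') = ix N (ix N a n) n' := by
          ext j; simp [ix]; ring
        rw [this, h', h]
      neg_mem' := by
        intro n h a
        have : ix N (ix N a (-n)) n = a := by
          ext j; simp [ix]
        rw [← h (ix N a (-n)), this] }
  have hs : ∀ j, (Pi.single j 1 : Fin g → ℤ) ∈ H := by
    intro j a
    have h1 : ix N a (Pi.single j 1) = a + sh N j := by
      have := ix_sh N a 0 j
      have h0 : ix N a 0 = a := by ext j; simp [ix]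
      rwa [zero_add, h0] at this
    have h2 := coef_rec hf a j
    rw [h1]
    constructor
    · intro h
      rw [h, mul_zero] at h2
      exact (mul_eq_zero.mp h2).resolve_left (ch_ne _ _)
    · intro h
      rw [h, mul_zero] at h2
      exact (mul_eq_zero.mp h2.symm).resolve_left (Complex.exp_ne_zero _)
  have : n ∈ H := by
    rw [pi_eq_sum_univ' n]
    exact sum_mem fun j _ => zsmul_mem (hs j) (n j)
  exact this a

/-- box index -/
def bx {g N : ℕ} (m : Fin g → Fin N) : Fin g → ℤ := fun j => ((m j : ℕ) : ℤ)

lemma bx_exists {g N : ℕ} (hN0 : 0 < N) (a : Fin g → ℤ) :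
    ∃ (m : Fin g → Fin N) (n : Fin g → ℤ), a = ix N (bx m) n := by
  have hN' : (0 : ℤ) < N := by exact_mod_cast hN0
  refine ⟨fun j => ⟨(a j % N).toNat, ?_⟩, fun j => a j / N, ?_⟩
  · have := Int.emod_lt_of_pos (a j) hN'
    have := Int.emod_nonneg (a j) hN'.ne'
    omega
  · ext j
    have := Int.emod_nonneg (a j) hN'.ne'
    simp only [ix, bx, Int.toNat_of_nonneg this]
    rw [Int.emod_add_mul_ediv]

lemma bx_ix {g N : ℕ} {m m' : Fin g → Fin N} {n : Fin g → ℤ} (h : ix N (bx m) n = bx m') :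
    m = m' ∧ n = 0 := by
  have key : ∀ j, m j = m' j ∧ n j = 0 := by
    intro j
    have h1 : ((m j : ℕ) : ℤ) + N * n j = ((m' j : ℕ) : ℤ) := congrFun h j
    have h2 := (m j).2
    have h3 := (m' j).2
    have hn : n j = 0 := by
      by_contra hne
      rcases lt_or_gt_of_ne hne with hlt | hgt
      · nlinarith
      · nlinarith
    refine ⟨Fin.ext ?_, hn⟩
    rw [hn] at h1
    omega
  exact ⟨funext fun j => (key j).1, funext fun j => (key j).2⟩

lemma eq_zero_of_box {g N : ℕ} (hN0 : 0 < N) {P : Matrix (Fin g) (Fin g) ℂ}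
    {f : (Fin g → ℂ) → ℂ} (hf : f ∈ thetaSpace g N P)
    (h : ∀ m : Fin g → Fin N, coef f (bx m) = 0) : f = 0 := by
  refine eq_zero_of_coef (mem_good hf) fun a => ?_
  obtain ⟨m, n, rfl⟩ := bx_exists hN0 a
  exact (coef_zero_iff hf n _).mpr (h m)

lemma ch_rep_norm {g : ℕ} (a : Fin g → ℤ) (t : T g) : ‖ch a (rep t)‖ = 1 := by
  rw [ch, Complex.norm_exp]
  have : (2 * Real.pi * Complex.I * ∑ j, (a j : ℂ) * rep t j)
      = ((2 * Real.pi * ∑ j, (a j : ℝ) * (Quotient.out (t j) : ℝ) : ℝ) : ℂ) * Complex.I := by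
    simp only [rep]
    push_cast
    ring
  rw [this]
  simp

lemma coef_theta {g N : ℕ} (hN0 : 0 < N) {P : Matrix (Fin g) (Fin g) ℂ}
    (hpos : (P.map Complex.im).PosDef) (m a : Fin g → ℤ) :
    coef (theta g N P m) a = ∑' n, q N P (ix N m n) * Av (ch (ix N m n + -a)) := by
  have h0 : ∀ n, Good g (fun z => q N P (ix N m n) * ch (ix N m n + -a) z) := fun n =>
    ⟨(ch_good _).1.const_mul _, fun z j => by simp only [(ch_good _).2]⟩
  have hs : Summable fun n => ‖q N P (ix N m n)‖ := by
    have := (q_summable hN0 hpos 0).comp_injective (ix_inj hN0 m)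
    simpa [Function.comp_def] using this
  have h1 := hasSum_integral_of_summable_integral_norm (μ := nu g)
    (F := fun n t => lft (fun z => q N P (ix N m n) * ch (ix N m n + -a) z) t)
    (fun n => lft_int (h0 n)) (by
      refine hs.congr fun n => ?_
      simp [lft, ch_rep_norm])
  have h2 : ∀ n, q N P (ix N m n) * Av (ch (ix N m n + -a))
      = ∫ t, lft (fun z => q N P (ix N m n) * ch (ix N m n + -a) z) t ∂(nu g) :=
    fun n => (Av_const_mul _ _).symm
  rw [tsum_congr h2, h1.tsum_eq]
  unfold coef Av
  congr 1
  ext t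
  simp only [lft, theta_eq hN0, ← tsum_mul_right, ch_add', mul_assoc]

lemma coef_theta_box {g N : ℕ} (hN0 : 0 < N) {P : Matrix (Fin g) (Fin g) ℂ}
    (hpos : (P.map Complex.im).PosDef) (m m' : Fin g → Fin N) :
    coef (theta g N P (bx m)) (bx m') = if m = m' then q N P (bx m) else 0 := by
  rw [coef_theta hN0 hpos]
  have hz : ix N (bx m) 0 = bx m := by ext j; simp [ix]
  rw [tsum_eq_single 0]
  · rw [hz]
    split_ifs with h
    · subst h
      rw [add_neg_cancel, Av_ch_zero, mul_one]
    · rw [Av_ch, mul_zero]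
      intro h'
      rw [← sub_eq_add_neg, sub_eq_zero, ← hz] at h'
      exact h (bx_ix h').1
  · intro n hn
    rw [Av_ch, mul_zero]
    intro h'
    rw [← sub_eq_add_neg, sub_eq_zero] at h'
    exact hn (bx_ix h').2

lemma coef_add {g : ℕ} {f f' : (Fin g → ℂ) → ℂ} (h : Good g f) (h' : Good g f')
    (a : Fin g → ℤ) : coef (f + f') a = coef f a + coef f' a := by
  unfold coef
  rw [← Av_add (h.mul (ch_good _)) (h'.mul (ch_good _))]
  simp only [Pi.add_apply, add_mul]

lemma coef_smul {g : ℕ} (c : ℂ) (f : (Fin g → ℂ) → ℂ)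
    (a : Fin g → ℤ) : coef (c • f) a = c * coef f a := by
  unfold coef
  rw [← Av_const_mul]
  simp only [Pi.smul_apply, smul_eq_mul, mul_assoc]

/-- coefficient map -/
noncomputable def Phi (g N : ℕ) (P : Matrix (Fin g) (Fin g) ℂ) :
    thetaSpace g N P →ₗ[ℂ] ((Fin g → Fin N) → ℂ) where
  toFun f m := coef f.1 (bx m)
  map_add' f f' := funext fun _ => coef_add (mem_good f.2) (mem_good f'.2) _
  map_smul' c f := funext fun _ => coef_smul c f.1 _

lemma Phi_inj {g N : ℕ} (hN0 : 0 < N) (P : Matrix (Fin g) (Fin g) ℂ) :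
    Function.Injective (Phi g N P) := by
  rw [← LinearMap.ker_eq_bot, LinearMap.ker_eq_bot']
  intro f hf
  exact Subtype.ext (eq_zero_of_box hN0 f.2 fun m => congrFun hf m)

/-- theta as an element of the space, combined with coefficients -/
lemma Phi_comb {g N : ℕ} (hN0 : 0 < N) {P : Matrix (Fin g) (Fin g) ℂ} (hsym : P.IsSymm)
    (hpos : (P.map Complex.im).PosDef) (c : (Fin g → Fin N) → ℂ) :
    Phi g N P (∑ m, (c m / q N P (bx m)) • ⟨theta g N P (bx m), theta_mem hN0 hsym hpos _⟩) = c := by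
  rw [map_sum]
  ext m'
  have hq : ∀ a : Fin g → ℤ, q N P a ≠ 0 := fun a => Complex.exp_ne_zero _
  have h : ∀ m, (Phi g N P ⟨theta g N P (bx m), theta_mem hN0 hsym hpos _⟩) m'
      = if m = m' then q N P (bx m) else 0 := fun m => coef_theta_box hN0 hpos m m'
  simp only [map_smul, Finset.sum_apply, Pi.smul_apply, smul_eq_mul, h]
  simp [hq]

end ThetaAux

/-- Every classical theta function is a `ℂ`-linear combination of the theta series
`θ_μ^Π`, `μ ∈ {0,…,N−1}^g`; consequently the space of classical theta functions has
complex dimension `N^g`. -/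
theorem theta_spans (g N : ℕ) (hg : 1 ≤ g) (hN0 : 0 < N) (hN : Even N)
    (P : Matrix (Fin g) (Fin g) ℂ) (hsym : P.IsSymm)
    (hpos : (P.map Complex.im).PosDef) :
    (∀ f : (Fin g → ℂ) → ℂ, Differentiable ℂ f →
      (∀ (z : Fin g → ℂ) (j : Fin g), f (z + Pi.single j 1) = f z) →
      (∀ (z : Fin g → ℂ) (j : Fin g), f (z + fun k => P k j)
        = Complex.exp (-(2 * Real.pi * Complex.I * N * z j)
            - Real.pi * Complex.I * N * P j j) * f z) →
      f ∈ Submodule.span ℂ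
        (Set.range fun m : Fin g → Fin N => theta g N P (fun j => ((m j : ℕ) : ℤ)))) ∧
    Module.finrank ℂ (thetaSpace g N P) = N ^ g := by
  have hmem : ∀ f : thetaSpace g N P, f.1 ∈ Submodule.span ℂ
      (Set.range fun m : Fin g → Fin N => theta g N P (fun j => ((m j : ℕ) : ℤ))) := by
    intro f
    have h := ThetaAux.Phi_inj hN0 P (ThetaAux.Phi_comb hN0 hsym hpos (ThetaAux.Phi g N P f))
    rw [← h, Submodule.coe_sum]
    refine Submodule.sum_mem _ fun m _ => ?_
    rw [Submodule.coe_smul]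
    exact Submodule.smul_mem _ _ (Submodule.subset_span ⟨m, rfl⟩)
  refine ⟨fun f h1 h2 h3 => hmem ⟨f, h1, h2, h3⟩, ?_⟩
  have e := LinearEquiv.ofBijective (ThetaAux.Phi g N P)
    ⟨ThetaAux.Phi_inj hN0 P, fun c => ⟨_, ThetaAux.Phi_comb hN0 hsym hpos c⟩⟩
  rw [e.finrank_eq]
  simp
end
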